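/- arXiv:1909.04085 — 3 statements merged into one kernel-verified Lean document; each statement's English description precedes it below -/
import Mathlib

section
/- Let a₁, a₂, a₃ ∈ ℂ, let p(z,w) = a₃w³ + a₂zw² + a₁z²w, let S = {(z, p(z, z̄)) : z ∈ ℂ} ⊆ ℂ², and let Φ : ℂ² → ℂ² be defined by Φ(z,w) = (z, p(z,w)). Then Φ⁻¹(S) is the union of three totally-real planes (i.e., there exist three real-linear subspaces R₁, R₂, R₃ of ℂ², each of real dimension 2 and each satisfying Rⱼ ∩ iRⱼ = {0}, with Φ⁻¹(S) = R₁ ∪ R₂ ∪ R₃) if and only if a₂² = 3a₁a₃ and a₃ ≠ 0. -/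
open Complex ComplexConjugate

/-- A totally-real plane in `ℂ²`: a real-linear subspace of real dimension 2
with `R ∩ iR = {0}`. -/
def TotallyRealPlane2 (R : Submodule ℝ (ℂ × ℂ)) : Prop :=
  Module.finrank ℝ R = 2 ∧
    (R : Set (ℂ × ℂ)) ∩ ((fun v => Complex.I • v) '' (R : Set (ℂ × ℂ))) = {0}

/-!
Assume `a₃ ≠ 0`. Writing `a₂ = 3a₃t` and `a₁ = a₃(c + 3t²)`, the equation `p(z, w) = p(z, z̄)` of
`Φ⁻¹(S)` becomes `x³ + cz²x = y³ + cz²y` in the variables `x = w + tz`, `y = z̄ + tz`, and the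
condition `a₂² = 3a₁a₃` becomes `c = 0`. If `c = 0`, the equation is `x³ = y³`, which splits into
the real-linear equations `x = ζy` with `ζ³ = 1`.

Conversely, `Φ⁻¹(S)` meets `{0} × ℂ` only at the origin, so the planes are graphs of real-linear
maps. One of them contains a point with `x ≠ y`; on it `x - y` vanishes only on a proper real
subspace, so `x² + xy + y² + cz² = 0` on the whole plane. Comparing the coefficients of `z̄²`, `zz̄`
and `z²` gives `x = ζy` for a primitive cube root of unity `ζ`, and then `c = 0`.

If `a₃ = 0`, then `Φ⁻¹(S)` contains the complex line `{0} × ℂ`, which finitely many totally-real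
planes cannot cover.
-/

lemma dense_compl_of_ne_top {𝕜 E : Type*} [NontriviallyNormedField 𝕜] [AddCommGroup E] [Module 𝕜 E]
    [TopologicalSpace E] [ContinuousAdd E] [ContinuousSMul 𝕜 E] {p : Submodule 𝕜 E} (hp : p ≠ ⊤) :
    Dense (p : Set E)ᶜ :=
  interior_eq_empty_iff_dense_compl.1 <| Set.not_nonempty_iff_eq_empty.1 fun h =>
    hp (p.eq_top_of_nonempty_interior' h)

lemma eq_zero_of_forall_linearMap_eq_zero_or {𝕜 E F G : Type*} [NontriviallyNormedField 𝕜]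
    [AddCommGroup E] [Module 𝕜 E] [TopologicalSpace E] [ContinuousAdd E] [ContinuousSMul 𝕜 E]
    [AddCommGroup F] [Module 𝕜 F] [Zero G] [TopologicalSpace G] [T2Space G]
    {f : E →ₗ[𝕜] F} {g : E → G} (hf : f ≠ 0) (hg : Continuous g)
    (h : ∀ x, f x = 0 ∨ g x = 0) : g = 0 :=
  hg.ext_on (dense_compl_of_ne_top (LinearMap.ker_eq_top.not.2 hf)) continuous_const
    fun x hx => (h x).resolve_left hx

lemma finrank_linearMap_graph {K V W : Type*} [Semiring K] [AddCommMonoid V] [Module K V]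
    [AddCommMonoid W] [Module K W] (f : V →ₗ[K] W) :
    Module.finrank K f.graph = Module.finrank K V :=
  LinearEquiv.finrank_eq
    { LinearMap.fst K V W ∘ₗ f.graph.subtype with
      invFun := fun v => ⟨(v, f v), rfl⟩
      left_inv := fun v => Subtype.ext (Prod.ext rfl v.2.symm)
      right_inv := fun _ => rfl }

lemma exists_eq_graph_of_finrank_eq {K V W : Type*} [DivisionRing K] [AddCommGroup V] [Module K V]
    [FiniteDimensional K V] [AddCommGroup W] [Module K W] {R : Submodule K (V × W)}
    [FiniteDimensional K R] (hR : Module.finrank K R = Module.finrank K V)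
    (h0 : ∀ w : W, (0, w) ∈ R → w = 0) : ∃ f : V →ₗ[K] W, R = f.graph := by
  let π : R →ₗ[K] V := LinearMap.fst K V W ∘ₗ R.subtype
  have hπ : Function.Injective π := by
    refine (injective_iff_map_eq_zero π).2 ?_
    rintro ⟨⟨v, w⟩, hm⟩ (rfl : v = 0)
    exact Subtype.ext (Prod.ext rfl (h0 w hm))
  exact Submodule.exists_eq_graph
    ⟨hπ, (LinearMap.injective_iff_surjective_of_finrank_eq_finrank hR).1 hπ⟩

lemma cube_eq_cube_iff {R : Type*} [CommRing R] [NoZeroDivisors R] {ω : R}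
    (hω : ω ^ 2 + ω + 1 = 0) {x y : R} :
    x ^ 3 = y ^ 3 ↔ x = y ∨ x = ω * y ∨ x = ω ^ 2 * y := by
  have factorization : x ^ 3 - y ^ 3 = (x - y) * ((x - ω * y) * (x - ω ^ 2 * y)) := by
    linear_combination (x - y) * (x * y + (1 - ω) * y ^ 2) * hω
  rw [← sub_eq_zero, factorization, mul_eq_zero, mul_eq_zero]
  simp only [sub_eq_zero]

lemma exists_ne_cube_add_mul_eq {K : Type*} [Field K] [IsAlgClosed K] [NeZero (3 : K)] {y : K}
    (hy : y ≠ 0) (d : K) : ∃ x ≠ y, x ^ 3 + d * x = y ^ 3 + d * y := by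
  obtain ⟨x, hx⟩ : ∃ x : K, x ^ 2 + y * x + (y ^ 2 + d) = 0 := by
    obtain ⟨x, hx⟩ := IsAlgClosed.exists_root
      (.C 1 * .X ^ 2 + .C y * .X + .C (y ^ 2 + d) : Polynomial K)
      (by rw [Polynomial.degree_quadratic one_ne_zero]; decide)
    exact ⟨x, by simpa using hx⟩
  by_cases hxy : x = y
  · -- The two roots add up to `-y`, so the other one is `-2y`.
    subst hxy
    refine ⟨-2 * x, fun h => mul_ne_zero three_ne_zero hy (by linear_combination -h), ?_⟩
    linear_combination -3 * x * hx
  · exact ⟨x, hxy, by linear_combination (x - y) * hx⟩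

lemma quadratic_conj_coeff_eq_zero {A B C : ℂ}
    (h : ∀ z : ℂ, A * z ^ 2 + B * (z * conj z) + C * conj z ^ 2 = 0) :
    A = 0 ∧ B = 0 ∧ C = 0 := by
  have at_one : A + B + C = 0 := by simpa using h 1
  have at_I : -A + B - C = 0 := by simpa [sub_eq_add_neg] using h I
  have at_one_add_I : I * A + B - I * C = 0 := by
    have := h (1 + I)
    simp only [map_add, map_one, conj_I] at this
    linear_combination this / 2 + (-A / 2 + B / 2 - C / 2) * I_sq
  have hB : B = 0 := by linear_combination (at_one + at_I) / 2
  have hAC : A = C := by linear_combination -I * at_one_add_I + I * hB + (A - C) * I_sq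
  have hA : A = 0 := by linear_combination (at_one - hB + hAC) / 2
  exact ⟨hA, hB, hAC ▸ hA⟩

/-- The real-linear endomorphism `z ↦ αz + βz̄` of `ℂ`, given by its Wirtinger derivatives
`α = ∂f/∂z` and `β = ∂f/∂z̄`. -/
noncomputable def wirtingerMap (α β : ℂ) : ℂ →ₗ[ℝ] ℂ :=
  LinearMap.mulLeft ℝ α + LinearMap.mulLeft ℝ β ∘ₗ conjAe.toLinearMap

@[simp]
lemma wirtingerMap_apply (α β z : ℂ) : wirtingerMap α β z = α * z + β * conj z := rfl

lemma exists_eq_wirtingerMap (f : ℂ →ₗ[ℝ] ℂ) : ∃ α β, f = wirtingerMap α β := by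
  refine ⟨(f 1 - I * f I) / 2, (f 1 + I * f I) / 2, basisOneI.ext fun i => ?_⟩
  fin_cases i
  · simp only [Fin.zero_eta, coe_basisOneI, Matrix.cons_val_zero, wirtingerMap_apply, map_one]
    ring
  · simp only [Fin.mk_one, coe_basisOneI, Matrix.cons_val_one, Matrix.cons_val_fin_one,
      wirtingerMap_apply, conj_I]
    linear_combination f I * I_sq

lemma totallyRealPlane2_iff {R : Submodule ℝ (ℂ × ℂ)} :
    TotallyRealPlane2 R ↔ Module.finrank ℝ R = 2 ∧ ∀ v ∈ R, I • v ∈ R → v = 0 := by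
  refine and_congr_right fun _ => ⟨fun h v hv hIv => ?_, fun h => ?_⟩
  · have : I • v = 0 := h.subset ⟨hIv, v, hv, rfl⟩
    exact (smul_eq_zero_iff_right I_ne_zero).1 this
  · refine Set.Subset.antisymm ?_ ?_
    · rintro _ ⟨hIv, v, hv, rfl⟩
      simp [h v hv hIv]
    · rintro _ rfl
      exact ⟨R.zero_mem, 0, R.zero_mem, smul_zero I⟩

lemma totallyRealPlane2_graph_wirtingerMap (α : ℂ) {β : ℂ} (hβ : β ≠ 0) :
    TotallyRealPlane2 (wirtingerMap α β).graph := by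
  refine totallyRealPlane2_iff.2 ⟨by rw [finrank_linearMap_graph, finrank_real_complex], ?_⟩
  rintro ⟨z, w⟩ hw hIw
  simp only [LinearMap.mem_graph_iff, wirtingerMap_apply, Prod.smul_mk, smul_eq_mul, map_mul,
    conj_I] at hw hIw
  have hz : 2 * I * β * conj z = 0 := by linear_combination hIw - I * hw
  obtain rfl : z = 0 := by simpa [hβ] using hz
  simp [hw]

lemma exists_smul_notMem_of_totallyRealPlane2 {ι : Type*} [Finite ι]
    {R : ι → Submodule ℝ (ℂ × ℂ)} (hR : ∀ i, TotallyRealPlane2 (R i)) {v : ℂ × ℂ} (hv : v ≠ 0) :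
    ∃ a : ℂ, ∀ i, a • v ∉ R i := by
  by_contra! hcover
  let line : ℂ →ₗ[ℝ] ℂ × ℂ := (LinearMap.toSpanSingleton ℂ (ℂ × ℂ) v).restrictScalars ℝ
  obtain ⟨i, hi⟩ := Subspace.exists_eq_top_of_iUnion_eq_univ (p := fun i => (R i).comap line)
    (Set.eq_univ_of_forall fun a => Set.mem_iUnion.2 (hcover a))
  have smul_mem (a : ℂ) : a • v ∈ R i := Submodule.eq_top_iff'.1 hi a
  exact hv ((totallyRealPlane2_iff.1 (hR i)).2 v (by simpa using smul_mem 1) (smul_mem I))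

/-- The binary cubic form `p(z, w) = a₃w³ + a₂zw² + a₁z²w`. -/
def cubicForm (a₁ a₂ a₃ z w : ℂ) : ℂ :=
  a₃ * w ^ 3 + a₂ * z * w ^ 2 + a₁ * z ^ 2 * w

/-- The preimage `Φ⁻¹(S)` of `S = {(z, p(z, z̄))}` under `Φ(z, w) = (z, p(z, w))`. -/
def cubicLocus (a₁ a₂ a₃ : ℂ) : Set (ℂ × ℂ) :=
  (fun zw : ℂ × ℂ => (zw.1, cubicForm a₁ a₂ a₃ zw.1 zw.2)) ⁻¹'
    {zw : ℂ × ℂ | ∃ z : ℂ, zw = (z, cubicForm a₁ a₂ a₃ z (conj z))}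

lemma mem_cubicLocus {a₁ a₂ a₃ z w : ℂ} :
    (z, w) ∈ cubicLocus a₁ a₂ a₃ ↔ cubicForm a₁ a₂ a₃ z w = cubicForm a₁ a₂ a₃ z (conj z) := by
  simp only [cubicLocus, Set.mem_preimage, Set.mem_ofPred_eq, Prod.mk.injEq, exists_eq_left']

lemma exists_depressed_coeff {a₃ : ℂ} (ha : a₃ ≠ 0) (a₁ a₂ : ℂ) :
    ∃ c t, a₁ = a₃ * (c + 3 * t ^ 2) ∧ a₂ = 3 * a₃ * t :=
  ⟨a₁ / a₃ - 3 * (a₂ / (3 * a₃)) ^ 2, a₂ / (3 * a₃), by field_simp; ring, by field_simp⟩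

lemma depressed_sq_eq_iff {a c t : ℂ} (ha : a ≠ 0) :
    (3 * a * t) ^ 2 = 3 * (a * (c + 3 * t ^ 2)) * a ↔ c = 0 := by
  rw [← sub_eq_zero, show (3 * a * t) ^ 2 - 3 * (a * (c + 3 * t ^ 2)) * a = -3 * a ^ 2 * c by ring]
  simp [ha]

lemma mem_cubicLocus_depressed {a c t z w : ℂ} (ha : a ≠ 0) :
    (z, w) ∈ cubicLocus (a * (c + 3 * t ^ 2)) (3 * a * t) a ↔
      (w + t * z) ^ 3 + c * z ^ 2 * (w + t * z) =
        (conj z + t * z) ^ 3 + c * z ^ 2 * (conj z + t * z) := by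
  have complete_cube (v : ℂ) : cubicForm (a * (c + 3 * t ^ 2)) (3 * a * t) a z v =
      a * ((v + t * z) ^ 3 + c * z ^ 2 * (v + t * z)) - a * (t ^ 3 + c * t) * z ^ 3 := by
    unfold cubicForm
    ring
  rw [mem_cubicLocus, complete_cube, complete_cube, sub_left_inj, mul_right_inj' ha]

lemma cubicLocus_eq_union_graph {a t ω : ℂ} (ha : a ≠ 0) (hω : ω ^ 2 + ω + 1 = 0) :
    cubicLocus (3 * a * t ^ 2) (3 * a * t) a =
      ((wirtingerMap 0 1).graph : Set (ℂ × ℂ)) ∪ (wirtingerMap ((ω - 1) * t) ω).graph ∪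
        (wirtingerMap ((ω ^ 2 - 1) * t) (ω ^ 2)).graph := by
  have graph_iff (ζ z w : ℂ) :
      w + t * z = ζ * (conj z + t * z) ↔ w = (ζ - 1) * t * z + ζ * conj z := by
    constructor <;> intro h <;> linear_combination h
  ext ⟨z, w⟩
  rw [show 3 * a * t ^ 2 = a * (0 + 3 * t ^ 2) by ring, mem_cubicLocus_depressed ha]
  simp only [zero_mul, add_zero, cube_eq_cube_iff hω, graph_iff, Set.mem_union, SetLike.mem_coe,
    LinearMap.mem_graph_iff, wirtingerMap_apply, zero_add, one_mul, add_left_inj, or_assoc]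

lemma exists_mem_cubicLocus_ne_conj {a₃ : ℂ} (ha : a₃ ≠ 0) (a₁ a₂ : ℂ) :
    ∃ z w, (z, w) ∈ cubicLocus a₁ a₂ a₃ ∧ w ≠ conj z := by
  obtain ⟨c, t, rfl, rfl⟩ := exists_depressed_coeff ha a₁ a₂
  obtain ⟨z, hz⟩ : ∃ z : ℂ, conj z + t * z ≠ 0 := by
    by_contra! h
    have at_one : 1 + t = 0 := by simpa using h 1
    have at_I : -I + t * I = 0 := by simpa using h I
    refine I_ne_zero ?_
    linear_combination (I * at_one - at_I) / 2
  obtain ⟨x, hne, hx⟩ := exists_ne_cube_add_mul_eq hz (c * z ^ 2)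
  refine ⟨z, x - t * z, (mem_cubicLocus_depressed ha).2 (by simpa using hx), fun h => hne ?_⟩
  linear_combination h

lemma eq_zero_of_cube_add_mul_wirtingerMap_eq {c t μ β : ℂ}
    (hne : wirtingerMap μ β ≠ wirtingerMap t 1)
    (h : ∀ z, wirtingerMap μ β z ^ 3 + c * z ^ 2 * wirtingerMap μ β z =
      wirtingerMap t 1 z ^ 3 + c * z ^ 2 * wirtingerMap t 1 z) : c = 0 := by
  let x := wirtingerMap μ β
  let y := wirtingerMap t 1
  have hquad : (fun z => x z ^ 2 + x z * y z + y z ^ 2 + c * z ^ 2) = 0 := by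
    refine eq_zero_of_forall_linearMap_eq_zero_or (sub_ne_zero.2 hne) ?_ fun z => ?_
    · simp only [x, y, wirtingerMap_apply]
      fun_prop
    · exact mul_eq_zero.1 (by rw [LinearMap.sub_apply]; linear_combination h z)
  obtain ⟨hzz, hzconj, hconj⟩ : μ ^ 2 + μ * t + t ^ 2 + c = 0 ∧
      2 * μ * β + μ + t * β + 2 * t = 0 ∧ β ^ 2 + β + 1 = 0 := by
    refine quadratic_conj_coeff_eq_zero fun z => ?_
    have := congrFun hquad z
    simp only [x, y, wirtingerMap_apply, Pi.zero_apply] at this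
    linear_combination this
  -- Since `(2β + 1)² = -3`, the coefficient of `zz̄` determines `μ`.
  have hμ : μ = t * β := by
    linear_combination -(2 * β + 1) / 3 * hzconj + (4 * μ + 2 * t) / 3 * hconj
  subst hμ
  linear_combination hzz - t ^ 2 * hconj

lemma eq_zero_of_graph_subset_cubicLocus {a c t : ℂ} (ha : a ≠ 0) {f : ℂ →ₗ[ℝ] ℂ}
    (hf : (f.graph : Set (ℂ × ℂ)) ⊆ cubicLocus (a * (c + 3 * t ^ 2)) (3 * a * t) a)
    (hne : ∃ z, f z ≠ conj z) : c = 0 := by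
  obtain ⟨α, β, rfl⟩ := exists_eq_wirtingerMap f
  obtain ⟨z, hz⟩ := hne
  have shear (z : ℂ) : wirtingerMap (α + t) β z = wirtingerMap α β z + t * z := by
    simp only [wirtingerMap_apply]
    ring
  have shear_conj (z : ℂ) : wirtingerMap t 1 z = conj z + t * z := by
    simp only [wirtingerMap_apply]
    ring
  refine eq_zero_of_cube_add_mul_wirtingerMap_eq (t := t) (μ := α + t) (β := β) ?_ fun z => ?_
  · intro h
    have := LinearMap.congr_fun h z
    rw [shear, shear_conj] at this
    exact hz (add_right_cancel this)
  · rw [shear, shear_conj]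
    exact (mem_cubicLocus_depressed ha).1 (hf rfl)

section FiniteUnion

variable {ι : Type*} {R : ι → Submodule ℝ (ℂ × ℂ)} {a₁ a₂ a₃ : ℂ}

lemma ne_zero_of_cubicLocus_eq_iUnion [Finite ι] (hR : ∀ i, TotallyRealPlane2 (R i))
    (h : cubicLocus a₁ a₂ a₃ = ⋃ i, (R i : Set (ℂ × ℂ))) : a₃ ≠ 0 := by
  rintro rfl
  obtain ⟨w, hw⟩ := exists_smul_notMem_of_totallyRealPlane2 hR (v := (0, 1)) (by simp)
  have hmem : (0, w) ∈ ⋃ i, (R i : Set (ℂ × ℂ)) := h ▸ mem_cubicLocus.2 (by simp [cubicForm])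
  obtain ⟨i, hi⟩ := Set.mem_iUnion.1 hmem
  exact hw i (by simpa using hi)

lemma sq_eq_of_cubicLocus_eq_iUnion (ha : a₃ ≠ 0) (hR : ∀ i, Module.finrank ℝ (R i) = 2)
    (h : cubicLocus a₁ a₂ a₃ = ⋃ i, (R i : Set (ℂ × ℂ))) : a₂ ^ 2 = 3 * a₁ * a₃ := by
  obtain ⟨z, w, hzw, hne⟩ := exists_mem_cubicLocus_ne_conj ha a₁ a₂
  obtain ⟨i, hi⟩ := Set.mem_iUnion.1 (h ▸ hzw)
  have hsub : (R i : Set (ℂ × ℂ)) ⊆ cubicLocus a₁ a₂ a₃ :=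
    (Set.subset_iUnion (fun i => (R i : Set (ℂ × ℂ))) i).trans_eq h.symm
  have fiber_zero (w : ℂ) (hw : (0, w) ∈ R i) : w = 0 := by
    simpa [cubicForm, ha] using mem_cubicLocus.1 (hsub hw)
  obtain ⟨f, hf⟩ := exists_eq_graph_of_finrank_eq
    ((hR i).trans finrank_real_complex.symm) fiber_zero
  rw [hf] at hsub hi
  obtain ⟨c, t, rfl, rfl⟩ := exists_depressed_coeff ha a₁ a₂
  rw [depressed_sq_eq_iff ha]
  obtain rfl : w = f z := hi
  exact eq_zero_of_graph_subset_cubicLocus ha hsub ⟨z, hne⟩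

end FiniteUnion

lemma exists_cubicLocus_eq_union {a₁ a₂ a₃ : ℂ} (ha : a₃ ≠ 0) (h : a₂ ^ 2 = 3 * a₁ * a₃) :
    ∃ R₁ R₂ R₃ : Submodule ℝ (ℂ × ℂ),
      TotallyRealPlane2 R₁ ∧ TotallyRealPlane2 R₂ ∧ TotallyRealPlane2 R₃ ∧
      cubicLocus a₁ a₂ a₃ = (R₁ : Set (ℂ × ℂ)) ∪ (R₂ : Set (ℂ × ℂ)) ∪ (R₃ : Set (ℂ × ℂ)) := by
  obtain ⟨c, t, rfl, rfl⟩ := exists_depressed_coeff ha a₁ a₂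
  obtain rfl := (depressed_sq_eq_iff ha).1 h
  rw [show a₃ * (0 + 3 * t ^ 2) = 3 * a₃ * t ^ 2 by ring]
  obtain ⟨ω, hω⟩ : ∃ ω : ℂ, ω ^ 2 + ω + 1 = 0 :=
    ⟨_, by simpa [Polynomial.cyclotomic_three] using
      (isPrimitiveRoot_exp 3 three_ne_zero).isRoot_cyclotomic three_pos⟩
  have hω0 : ω ≠ 0 := by
    rintro rfl
    simp at hω
  exact ⟨_, _, _, totallyRealPlane2_graph_wirtingerMap _ one_ne_zero,
    totallyRealPlane2_graph_wirtingerMap _ hω0,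
    totallyRealPlane2_graph_wirtingerMap _ (pow_ne_zero 2 hω0), cubicLocus_eq_union_graph ha hω⟩

theorem stmt_0_general (a₁ a₂ a₃ : ℂ) :
    [∃ (n : ℕ) (R : Fin n → Submodule ℝ (ℂ × ℂ)), (∀ i, TotallyRealPlane2 (R i)) ∧
        cubicLocus a₁ a₂ a₃ = ⋃ i, (R i : Set (ℂ × ℂ)),
      ∃ R₁ R₂ R₃ : Submodule ℝ (ℂ × ℂ),
        TotallyRealPlane2 R₁ ∧ TotallyRealPlane2 R₂ ∧ TotallyRealPlane2 R₃ ∧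
        cubicLocus a₁ a₂ a₃ = (R₁ : Set (ℂ × ℂ)) ∪ (R₂ : Set (ℂ × ℂ)) ∪ (R₃ : Set (ℂ × ℂ)),
      a₂ ^ 2 = 3 * a₁ * a₃ ∧ a₃ ≠ 0].TFAE := by
  tfae_have 1 → 3 := by
    rintro ⟨n, R, hR, h⟩
    have ha : a₃ ≠ 0 := ne_zero_of_cubicLocus_eq_iUnion hR h
    exact ⟨sq_eq_of_cubicLocus_eq_iUnion ha (fun i => (hR i).1) h, ha⟩
  tfae_have 3 → 2 := fun ⟨h, ha⟩ => exists_cubicLocus_eq_union ha h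
  tfae_have 2 → 1 := by
    rintro ⟨R₁, R₂, R₃, h₁, h₂, h₃, h⟩
    refine ⟨3, ![R₁, R₂, R₃], by simp [Fin.forall_fin_succ, h₁, h₂, h₃], h.trans ?_⟩
    ext v
    simp [Fin.exists_fin_succ, or_assoc]
  tfae_finish

/-- With `p(z,w) = a₃w³ + a₂zw² + a₁z²w`, `S = {(z, p(z, z̄)) : z ∈ ℂ}` and
`Φ(z,w) = (z, p(z,w))`, the preimage `Φ⁻¹(S)` is a union of three totally-real planes
iff `a₂² = 3a₁a₃` and `a₃ ≠ 0`. -/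
theorem stmt_0 (a₁ a₂ a₃ : ℂ) :
    (∃ R₁ R₂ R₃ : Submodule ℝ (ℂ × ℂ),
        TotallyRealPlane2 R₁ ∧ TotallyRealPlane2 R₂ ∧ TotallyRealPlane2 R₃ ∧
        (fun zw : ℂ × ℂ =>
            (zw.1, a₃ * zw.2 ^ 3 + a₂ * zw.1 * zw.2 ^ 2 + a₁ * zw.1 ^ 2 * zw.2)) ⁻¹'
            {zw : ℂ × ℂ | ∃ z : ℂ,
              zw = (z, a₃ * (conj z) ^ 3 + a₂ * z * (conj z) ^ 2 + a₁ * z ^ 2 * conj z)} =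
          (R₁ : Set (ℂ × ℂ)) ∪ (R₂ : Set (ℂ × ℂ)) ∪ (R₃ : Set (ℂ × ℂ))) ↔
      a₂ ^ 2 = 3 * a₁ * a₃ ∧ a₃ ≠ 0 :=
  (stmt_0_general a₁ a₂ a₃).out 1 2
end

section
/- For every t > √(15 − √33)/(2√2), the set P₀ᵗ ∪ P₁ᵗ ∪ P₂ᵗ is locally polynomially convex at the origin, i.e., there exists r > 0 such that (P₀ᵗ ∪ P₁ᵗ ∪ P₂ᵗ) ∩ B̄(0;r) is polynomially convex. -/
open Complex ComplexConjugate

/-- The polynomially convex hull of a set `K ⊆ ℂ²`. -/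
def polyHull2 (K : Set (ℂ × ℂ)) : Set (ℂ × ℂ) :=
  { z | ∀ p : MvPolynomial (Fin 2) ℂ,
      ‖MvPolynomial.eval (fun i => if i = 0 then z.1 else z.2) p‖ ≤
        sSup ((fun w : ℂ × ℂ =>
          ‖MvPolynomial.eval (fun i => if i = 0 then w.1 else w.2) p‖) '' K) }

/-- A set `K ⊆ ℂ²` is polynomially convex if it equals its polynomially convex hull. -/
def PolyConvex2 (K : Set (ℂ × ℂ)) : Prop := polyHull2 K = K

/-- The closed Euclidean ball of radius `r` centred at the origin in `ℂ²`. -/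
def eClosedBall (r : ℝ) : Set (ℂ × ℂ) := { z | ‖z.1‖ ^ 2 + ‖z.2‖ ^ 2 ≤ r ^ 2 }

/-- The open Euclidean ball of radius `r` centred at the origin in `ℂ²`. -/
def eOpenBall (r : ℝ) : Set (ℂ × ℂ) := { z | ‖z.1‖ ^ 2 + ‖z.2‖ ^ 2 < r ^ 2 }

/-- The plane `P₀ᵗ = {w = z̄}`. -/
def P0 : Set (ℂ × ℂ) := { zw | zw.2 = conj zw.1 }

/-- The plane `P₁ᵗ = {w = −(√3(√3−i)/(2t)) z − ((1−i√3)/2) z̄}`. -/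
noncomputable def P1 (t : ℝ) : Set (ℂ × ℂ) :=
  { zw | zw.2 = -((Real.sqrt 3 : ℂ) * ((Real.sqrt 3 : ℂ) - Complex.I) / (2 * (t : ℂ))) * zw.1
      - ((1 - Complex.I * (Real.sqrt 3 : ℂ)) / 2) * conj zw.1 }

/-- The plane `P₂ᵗ = {w = −(√3(√3+i)/(2t)) z − ((1+i√3)/2) z̄}`. -/
noncomputable def P2 (t : ℝ) : Set (ℂ × ℂ) :=
  { zw | zw.2 = -((Real.sqrt 3 : ℂ) * ((Real.sqrt 3 : ℂ) + Complex.I) / (2 * (t : ℂ))) * zw.1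
      - ((1 + Complex.I * (Real.sqrt 3 : ℂ)) / 2) * conj zw.1 }

/-! The planes are separated one at a time by a form of Kallin's lemma. Let `p` be a polynomial
which on a compact set takes values in an open sector `|arg ζ| < θ` or off the closed sector, `0`
apart. With `ξ = exp (iθ)`, neither `-ξ p` nor `-ξ̄ p` meets the negative half-line, so both have
square roots with nonnegative real part in the uniform closure of the polynomials. The product of
these roots is `±p`, with the sign `+` exactly on the sector, so `p ± √(-ξ p) √(-ξ̄ p)` vanishes on
one of the two pieces and shows that a point of the hull where `p ≠ 0` lies in the hull of one
piece. Where `p = 0`, the function `exp (-√(-ξ p))` peaks on the zeros of `p`.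

For the planes `w + t⁻¹ z = ν (z̄ + t⁻¹ z)` with `ν³ = 1`, rotating by `ν⁻¹` moves any one of
them to `w = z̄`. There the quadratic form `kallinForm k t` stays in the sector `|arg ζ| < π/6` as
soon as `t⁻² + 3 (2kt - t⁻¹)² < 1`, while on the other two it stays off the closed sector as soon as
`k < 1/3`. Such a `k` exists precisely when `t² > (15 - √33) / 8`. -/

section SquareRoots

theorem re_mul_conj_pos_of_im_sq_eq {u v : ℂ} (hu : 0 < u.re) (hv : 0 < v.re)
    (h : (u ^ 2).im = (v ^ 2).im) : 0 < (u * conj v).re := by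
  have him : u.re * u.im = v.re * v.im := by
    simp only [sq, mul_im] at h
    linarith
  have hmul : 0 ≤ u.im * v.im := by
    refine nonneg_of_mul_nonneg_right (b := u.im * v.im) ?_ (mul_pos hu hv)
    calc (0 : ℝ) ≤ (u.re * u.im) ^ 2 := sq_nonneg _
      _ = u.re * u.im * (v.re * v.im) := by rw [← him, sq]
      _ = u.re * v.re * (u.im * v.im) := by ring
  simp only [mul_re, conj_re, conj_im]
  linarith [mul_pos hu hv]

theorem norm_sub_sq_le_norm_sq_sub_sq {u v : ℂ} (hu : 0 < u.re) (hv : 0 < v.re)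
    (h : (u ^ 2).im = (v ^ 2).im) : ‖u - v‖ ^ 2 ≤ ‖u ^ 2 - v ^ 2‖ := by
  have hle : ‖u - v‖ ≤ ‖u + v‖ := by
    rw [← sq_le_sq₀ (norm_nonneg _) (norm_nonneg _), ← normSq_eq_norm_sq, ← normSq_eq_norm_sq,
      normSq_sub, normSq_add]
    linarith [re_mul_conj_pos_of_im_sq_eq hu hv h]
  calc ‖u - v‖ ^ 2 ≤ ‖u + v‖ * ‖u - v‖ := by
        rw [sq]; exact mul_le_mul_of_nonneg_right hle (norm_nonneg _)
    _ = ‖u ^ 2 - v ^ 2‖ := by rw [← norm_mul, sq_sub_sq]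

theorem re_mul_pos_of_sq_mem_slitPlane {u w : ℂ} (hu : 0 < u.re) (hw : 0 < w.re)
    (him : ((u * w) ^ 2).im = (u ^ 2).im) (hslit : (u * w) ^ 2 ∈ slitPlane) :
    0 < (u * w).re := by
  rcases lt_trichotomy (u * w).re 0 with hneg | hzero | hpos
  · have hnu : 0 < (u * conj (-(u * w))).re :=
      re_mul_conj_pos_of_im_sq_eq hu (by simpa using hneg) (by rw [neg_sq, him])
    have hflip : (u * conj (-(u * w))).re = -(normSq u * w.re) := by
      simp only [normSq_apply, mul_re, mul_im, conj_re, conj_im, neg_re, neg_im]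
      ring
    linarith [mul_nonneg (normSq_nonneg u) hw.le]
  · refine absurd hslit ?_
    simp [mem_slitPlane_iff, sq, mul_re (u * w), mul_im (u * w), hzero, mul_self_nonneg]
  · exact hpos

theorem ofReal_sub_mem_slitPlane {δ : ℝ} {z : ℂ} (hz : ∀ s : ℝ, δ ≤ s → z ≠ s) :
    (δ : ℂ) - z ∈ slitPlane := by
  by_contra h
  rw [mem_slitPlane_iff_not_le_zero, not_not, le_def] at h
  simp only [sub_re, ofReal_re, zero_re, sub_im, ofReal_im, zero_im] at h
  exact hz z.re (by linarith [h.1]) (Complex.ext rfl (by simpa using h.2))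

theorem eventually_exists_sq_eq_near_one (𝕜 : Type*) {R : Type*} [NontriviallyNormedField 𝕜]
    [CharZero 𝕜] [NormedCommRing R] [NormedAlgebra 𝕜 R] [CompleteSpace R] :
    ∀ᶠ v in nhds (1 : R), ∃ w : R, w ^ 2 = v ∧ ‖w - 1‖ < 1 := by
  let double : R ≃L[𝕜] R := ContinuousLinearEquiv.smulLeft (Units.mk0 (2 : 𝕜) two_ne_zero)
  have hderiv : HasStrictFDerivAt (fun w : R => w ^ 2) (double : R →L[𝕜] R) 1 :=
    ((hasStrictFDerivAt_id (𝕜 := 𝕜) (1 : R)).pow 2).congr_fderiv <| by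
      ext w
      simp [double, Units.smul_def, ofNat_smul_eq_nsmul, two_mul]
  have hball : (fun w : R => w ^ 2) '' Metric.ball 1 1 ∈ nhds (1 : R) := by
    have := Filter.image_mem_map (m := fun w : R => w ^ 2) (Metric.ball_mem_nhds (1 : R) one_pos)
    rwa [hderiv.map_nhds_eq_of_equiv, one_pow] at this
  filter_upwards [hball] with v ⟨w, hw, hwv⟩
  exact ⟨w, hwv, mem_ball_iff_norm.mp hw⟩

variable {X : Type*} [TopologicalSpace X] {B : Subalgebra ℂ C(X, ℂ)}

/-- `g` is a square root of `b` with values in the open right half-plane that is invertible within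
the subalgebra `B`. -/
structure IsRightSqrt (b g : B) : Prop where
  isUnit : IsUnit g
  sq_eq : g ^ 2 = b
  re_pos : ∀ y, 0 < (g.1 y).re

theorem IsRightSqrt.apply_sq {b g : B} (hg : IsRightSqrt b g) (y : X) : g.1 y ^ 2 = b.1 y :=
  congrArg (fun f : B => f.1 y) hg.sq_eq

variable [CompactSpace X]

theorem IsRightSqrt.dist_le_sqrt {a g g' : B} {s s' : ℝ}
    (hg : IsRightSqrt (algebraMap ℂ B s - a) g) (hg' : IsRightSqrt (algebraMap ℂ B s' - a) g') :
    dist g g' ≤ √|s - s'| := by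
  rw [dist_eq_norm]
  refine (ContinuousMap.norm_le (g - g').1 (Real.sqrt_nonneg _)).mpr fun y => ?_
  have hdiff : g.1 y ^ 2 - g'.1 y ^ 2 = ((s - s' : ℝ) : ℂ) := by
    rw [hg.apply_sq, hg'.apply_sq, ofReal_sub]
    exact sub_sub_sub_cancel_right _ _ _
  have him : (g.1 y ^ 2).im = (g'.1 y ^ 2).im := by
    rw [← sub_eq_zero, ← sub_im, hdiff, ofReal_im]
  refine Real.le_sqrt_of_sq_le ?_
  calc ‖g.1 y - g'.1 y‖ ^ 2 ≤ ‖g.1 y ^ 2 - g'.1 y ^ 2‖ :=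
        norm_sub_sq_le_norm_sq_sub_sq (hg.re_pos y) (hg'.re_pos y) him
    _ = |s - s'| := by rw [hdiff, norm_real, Real.norm_eq_abs]

theorem IsRightSqrt.exists_sub_ofReal {b g : B} (hg : IsRightSqrt b g) {c h r : ℝ} (hc : 0 < c)
    (hh : 0 ≤ h) (hr : h < r * c) (hsqrt : ∀ v : B, ‖v - 1‖ < r → ∃ w, IsRightSqrt v w)
    (hb : ∀ y, c ≤ ‖b.1 y‖) (hslit : ∀ y, b.1 y - h ∈ slitPlane) :
    ∃ g', IsRightSqrt (b - algebraMap ℂ B h) g' := by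
  obtain ⟨i, hi⟩ := (hg.isUnit.pow 2).exists_right_inv
  rw [hg.sq_eq] at hi
  have hi_apply (y : X) : b.1 y * i.1 y = 1 := congrArg (fun f : B => f.1 y) hi
  have hi_norm : ‖i.1‖ ≤ c⁻¹ := by
    refine (ContinuousMap.norm_le _ (inv_nonneg.mpr hc.le)).mpr fun y => ?_
    rw [eq_inv_of_mul_eq_one_right (hi_apply y), norm_inv]
    exact inv_anti₀ hc (hb y)
  obtain ⟨w, hw⟩ := hsqrt (1 - (h : ℂ) • i) <| by
    rw [sub_sub_cancel_left, norm_neg, norm_smul, norm_real, Real.norm_of_nonneg hh]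
    calc h * ‖i‖ ≤ h * c⁻¹ := mul_le_mul_of_nonneg_left hi_norm hh
      _ < r := by rwa [← div_eq_mul_inv, div_lt_iff₀ hc]
  have hgw : (g * w) ^ 2 = b - algebraMap ℂ B h := by
    rw [mul_pow, hw.sq_eq, hg.sq_eq, mul_sub, mul_one, mul_smul_comm, hi,
      Algebra.algebraMap_eq_smul_one]
  have hgw_apply (y : X) : (g.1 y * w.1 y) ^ 2 = b.1 y - h := congrArg (fun f : B => f.1 y) hgw
  refine ⟨g * w, hg.isUnit.mul hw.isUnit, hgw, fun y => ?_⟩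
  refine re_mul_pos_of_sq_mem_slitPlane (hg.re_pos y) (hw.re_pos y) ?_
    (by rw [hgw_apply]; exact hslit y)
  rw [hgw_apply, hg.apply_sq, sub_im, ofReal_im, sub_zero]

theorem exists_pos_le_norm_ofReal_sub {δ : ℝ} (a : C(X, ℂ)) (ha : ∀ s : ℝ, δ ≤ s → ∀ y, a y ≠ s) :
    ∃ c > 0, ∀ s : ℝ, δ ≤ s → ∀ y, c ≤ ‖(s : ℂ) - a y‖ := by
  have hray : IsClosed (Complex.ofReal '' Set.Ici δ) :=
    isometry_ofReal.isClosedEmbedding.isClosedMap _ isClosed_Ici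
  have hdisj : Disjoint (Set.range a) (Complex.ofReal '' Set.Ici δ) := by
    rw [Set.disjoint_left]
    rintro _ ⟨y, rfl⟩ ⟨s, hs, hsy⟩
    exact ha s hs y hsy.symm
  obtain ⟨c, hc, hdist⟩ :=
    Metric.exists_pos_forall_lt_edist (isCompact_range a.continuous) hray hdisj
  refine ⟨c, hc, fun s hs y => ?_⟩
  have hlt := hdist _ ⟨y, rfl⟩ _ ⟨s, hs, rfl⟩
  rw [edist_comm, edist_eq_enorm_sub, enorm_eq_nnnorm, ENNReal.coe_lt_coe] at hlt
  exact_mod_cast hlt.le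

variable [CompleteSpace B]

variable (B) in
theorem exists_isRightSqrt_near_one : ∃ r > 0, ∀ v : B, ‖v - 1‖ < r → ∃ w, IsRightSqrt v w := by
  obtain ⟨r, hr, hsqrt⟩ := Metric.eventually_nhds_iff_ball.mp
    (eventually_exists_sq_eq_near_one ℂ (R := B))
  refine ⟨r, hr, fun v hv => ?_⟩
  obtain ⟨w, hwv, hw⟩ := hsqrt v (mem_ball_iff_norm.mpr hv)
  refine ⟨w, ?_, hwv, fun y => ?_⟩
  · simpa using isUnit_one_sub_of_norm_lt_one (x := 1 - w) (by rwa [norm_sub_rev])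
  · have hy : ‖w.1 y - 1‖ < 1 := ((w - 1).1.norm_coe_le_norm y).trans_lt hw
    have hre := (abs_le.mp (abs_re_le_norm (w.1 y - 1))).1
    rw [sub_re, one_re] at hre
    linarith

theorem eventually_exists_isRightSqrt_ofReal_sub (a : B) :
    ∀ᶠ s : ℝ in Filter.atTop, ∃ g, IsRightSqrt (algebraMap ℂ B s - a) g := by
  obtain ⟨r, hr, hsqrt⟩ := exists_isRightSqrt_near_one B
  filter_upwards [Filter.eventually_gt_atTop 0, Filter.eventually_gt_atTop (‖a‖ / r)] with s hs hsr
  obtain ⟨w, hw⟩ := hsqrt (1 - (s : ℂ)⁻¹ • a) <| by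
    rw [sub_sub_cancel_left, norm_neg, norm_smul, norm_inv, norm_real, Real.norm_of_nonneg hs.le,
      inv_mul_lt_iff₀ hs]
    rwa [div_lt_iff₀ hr] at hsr
  have hroot : ((√s : ℝ) : ℂ) ≠ 0 := ofReal_ne_zero.mpr (Real.sqrt_pos.mpr hs).ne'
  refine ⟨algebraMap ℂ B (√s : ℝ) * w, (hroot.isUnit.map (algebraMap ℂ B)).mul hw.isUnit, ?_,
    fun y => ?_⟩
  · rw [mul_pow, hw.sq_eq, ← map_pow, ← ofReal_pow, Real.sq_sqrt hs.le, mul_sub, mul_one,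
      ← Algebra.smul_def, smul_inv_smul₀ (ofReal_ne_zero.mpr hs.ne')]
  · simpa using mul_pos (Real.sqrt_pos.mpr hs) (hw.re_pos y)

theorem exists_isRightSqrt_ofReal_sub {a : B} {δ : ℝ}
    (ha : ∀ s : ℝ, δ ≤ s → ∀ y, a.1 y ≠ s) : ∃ g, IsRightSqrt (algebraMap ℂ B δ - a) g := by
  obtain ⟨r, hr, hsqrt⟩ := exists_isRightSqrt_near_one B
  obtain ⟨c, hc, hac⟩ := exists_pos_le_norm_ofReal_sub a.1 ha
  obtain ⟨S, hS⟩ := Filter.eventually_atTop.mp (eventually_exists_isRightSqrt_ofReal_sub a)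
  -- Roots exist for all large `s`; the step `h` by which one can move towards `δ` is uniform.
  set h : ℝ := r * c / 2 with hh
  have hh0 : 0 < h := by positivity
  have descend (n : ℕ) : ∀ s : ℝ, δ ≤ s → S ≤ s + n * h →
      ∃ g, IsRightSqrt (algebraMap ℂ B s - a) g := by
    induction n with
    | zero => exact fun s _ hSs => hS s (by simpa using hSs)
    | succ n ih =>
      intro s hs hSs
      obtain ⟨g, hg⟩ := ih (s + h) (by linarith) (by push_cast at hSs; linarith)
      have hshift : algebraMap ℂ B ((s + h : ℝ) : ℂ) - a - algebraMap ℂ B h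
          = algebraMap ℂ B s - a := by
        rw [ofReal_add, map_add]; abel
      have hslit (y : X) : ((s + h : ℝ) : ℂ) - a.1 y - h ∈ slitPlane := by
        rw [ofReal_add, sub_right_comm, add_sub_cancel_right]
        exact ofReal_sub_mem_slitPlane fun s' hs' => ha s' (hs.trans hs') y
      exact hshift ▸ hg.exists_sub_ofReal hc hh0.le (by linarith [mul_pos hr hc]) hsqrt
        (hac (s + h) (by linarith)) hslit
  obtain ⟨n, hn⟩ := exists_nat_gt ((S - δ) / h)
  exact descend n δ le_rfl (by linarith [(div_lt_iff₀ hh0).mp hn])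

theorem isUnit_ofReal_sub {a : B} {δ : ℝ} (ha : ∀ s : ℝ, δ ≤ s → ∀ y, a.1 y ≠ s) :
    IsUnit (algebraMap ℂ B δ - a) := by
  obtain ⟨g, hg⟩ := exists_isRightSqrt_ofReal_sub ha
  exact hg.sq_eq ▸ hg.isUnit.pow 2

theorem exists_sq_eq_neg_of_avoids_pos {a : B} (ha : ∀ s : ℝ, 0 < s → ∀ y, a.1 y ≠ s) :
    ∃ g : B, g ^ 2 = -a ∧ ∀ y, 0 ≤ (g.1 y).re := by
  have hroot (n : ℕ) : ∃ g, IsRightSqrt (algebraMap ℂ B ((1 / (n + 1 : ℝ) : ℝ) : ℂ) - a) g :=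
    exists_isRightSqrt_ofReal_sub fun s hs => ha s (Nat.one_div_pos_of_nat.trans_le hs)
  choose g hg using hroot
  have hlim : Filter.Tendsto (fun n : ℕ => 1 / (n + 1 : ℝ)) Filter.atTop (nhds 0) :=
    tendsto_one_div_add_atTop_nhds_zero_nat
  have hcauchy : CauchySeq g := by
    refine cauchySeq_of_le_tendsto_0 (fun N : ℕ => √(1 / (N + 1 : ℝ))) (fun n m N hn hm => ?_) ?_
    · refine ((hg n).dist_le_sqrt (hg m)).trans (Real.sqrt_le_sqrt ?_)
      have hn' := Nat.one_div_le_one_div (α := ℝ) hn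
      have hm' := Nat.one_div_le_one_div (α := ℝ) hm
      rw [abs_le]
      constructor <;>
        linarith [Nat.one_div_pos_of_nat (α := ℝ) (n := n),
          Nat.one_div_pos_of_nat (α := ℝ) (n := m)]
    · simpa using hlim.sqrt
  obtain ⟨G, hG⟩ := cauchySeq_tendsto_of_complete hcauchy
  refine ⟨G, tendsto_nhds_unique (hG.pow 2) ?_, fun y => ?_⟩
  · simp only [(hg _).sq_eq]
    have halg := ((continuous_algebraMap ℂ B).comp continuous_ofReal).tendsto 0 |>.comp hlim
    simpa using halg.sub_const a
  · have heval : Continuous fun f : B => (f.1 y).re :=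
      continuous_re.comp ((continuous_eval_const y).comp continuous_subtype_val)
    exact ge_of_tendsto' ((heval.tendsto G).comp hG) fun n => ((hg n).re_pos y).le

end SquareRoots

section Hulls

variable {E : Type*} [TopologicalSpace E] {A : Subalgebra ℂ C(E, ℂ)} {K K' S : Set E}

/-- The hull of `K` with respect to an algebra `A` of continuous functions. The bounds `C` are
required to be nonnegative, so that the hull of the empty set is empty. -/
def algHull (A : Subalgebra ℂ C(E, ℂ)) (K : Set E) : Set E :=
  {x | ∀ f ∈ A, ∀ C : ℝ, 0 ≤ C → (∀ y ∈ K, ‖f y‖ ≤ C) → ‖f x‖ ≤ C}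

theorem algHull_mono (h : K ⊆ K') : algHull A K ⊆ algHull A K' :=
  fun _ hx f hf C hC hK' => hx f hf C hC fun y hy => hK' y (h hy)

theorem subset_algHull (K : Set E) : K ⊆ algHull A K :=
  fun y hy _ _ _ _ hC => hC y hy

/-- The algebra of continuous functions on `S` that are uniform limits of restrictions of
members of `A`. -/
noncomputable def uniformClosureOn (A : Subalgebra ℂ C(E, ℂ)) (S : Set E) [CompactSpace S] :
    Subalgebra ℂ C(S, ℂ) :=
  (A.map (ContinuousMap.compRightAlgHom ℂ ℂ
    (⟨Subtype.val, continuous_subtype_val⟩ : C(S, E)))).topologicalClosure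

theorem restrict_mem_uniformClosureOn {f : C(E, ℂ)} (hf : f ∈ A) (S : Set E) [CompactSpace S] :
    f.restrict S ∈ uniformClosureOn A S :=
  subset_closure ⟨f, hf, rfl⟩

instance [CompactSpace S] : CompleteSpace (uniformClosureOn A S) :=
  (Subalgebra.isClosed_topologicalClosure _).completeSpace_coe

theorem exists_norm_sub_lt_of_mem_uniformClosureOn [CompactSpace S] {g : C(S, ℂ)}
    (hg : g ∈ uniformClosureOn A S) {ε : ℝ} (hε : 0 < ε) : ∃ f ∈ A, ∀ y : S, ‖f y - g y‖ < ε := by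
  obtain ⟨_, ⟨f, hf, rfl⟩, hfg⟩ := Metric.mem_closure_iff.mp hg ε hε
  refine ⟨f, hf, fun y => ?_⟩
  rw [dist_comm, dist_eq_norm] at hfg
  exact (ContinuousMap.norm_coe_le_norm (f.restrict S - g) y).trans_lt hfg

theorem norm_le_of_mem_algHull [CompactSpace S] {x : S} (hx : x.1 ∈ algHull A K) (hKS : K ⊆ S)
    {g : C(S, ℂ)} (hg : g ∈ uniformClosureOn A S) {C : ℝ} (hC : 0 ≤ C)
    (hgC : ∀ y : S, y.1 ∈ K → ‖g y‖ ≤ C) : ‖g x‖ ≤ C := by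
  refine le_of_forall_pos_le_add fun ε hε => ?_
  obtain ⟨f, hf, hfg⟩ := exists_norm_sub_lt_of_mem_uniformClosureOn hg (half_pos hε)
  have hfx : ‖f x‖ ≤ C + ε / 2 := hx f hf _ (by positivity) fun y hy => by
    have := norm_le_norm_add_norm_sub (g ⟨y, hKS hy⟩) (f y)
    linarith [hgC ⟨y, hKS hy⟩ hy, norm_sub_rev (f y) (g ⟨y, hKS hy⟩), hfg ⟨y, hKS hy⟩]
  have := norm_le_norm_add_norm_sub (f x) (g x)
  linarith [hfg x]

theorem le_of_pow_mul_le_pow_mul {x C a M : ℝ} (hC : 0 ≤ C) (ha : 0 < a)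
    (h : ∀ n : ℕ, x ^ n * a ≤ C ^ n * M) : x ≤ C := by
  by_contra! hlt
  have hx : 0 < x := hC.trans_lt hlt
  have hbound (n : ℕ) : a ≤ (C / x) ^ n * M := by
    rw [div_pow, div_mul_eq_mul_div, le_div_iff₀ (pow_pos hx n), mul_comm]
    exact h n
  have hlim : Filter.Tendsto (fun n : ℕ => (C / x) ^ n * M) Filter.atTop (nhds 0) := by
    simpa using (tendsto_pow_atTop_nhds_zero_of_lt_one (div_nonneg hC hx.le)
      ((div_lt_one hx).mpr hlt)).mul_const M
  exact ha.not_ge (ge_of_tendsto' hlim hbound)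

theorem mem_algHull_of_eq_zero_off [CompactSpace S] {x : S} (hx : x.1 ∈ algHull A K) (hKS : K ⊆ S)
    {e : C(S, ℂ)} (he : e ∈ uniformClosureOn A S) (hex : e x ≠ 0)
    (hoff : ∀ y : S, y.1 ∈ K → y.1 ∉ K' → e y = 0) : x.1 ∈ algHull A K' := by
  intro f hf C hC hfC
  -- Bound `f ^ n * e` and let `n` tend to infinity.
  refine le_of_pow_mul_le_pow_mul (a := ‖e x‖) (M := ‖e‖) hC (norm_pos_iff.mpr hex) fun n => ?_
  have hmem : f.restrict S ^ n * e ∈ uniformClosureOn A S :=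
    mul_mem (pow_mem (restrict_mem_uniformClosureOn hf S) n) he
  have hle := norm_le_of_mem_algHull hx hKS hmem (C := C ^ n * ‖e‖) (by positivity) fun y hy => ?_
  · simpa using hle
  · by_cases hy' : y.1 ∈ K'
    · simpa using mul_le_mul (pow_le_pow_left₀ (norm_nonneg _) (hfC y hy') n)
        (e.norm_coe_le_norm y) (norm_nonneg _) (by positivity)
    · simp only [ContinuousMap.mul_apply, hoff y hy hy', mul_zero, norm_zero]
      positivity

theorem exists_pow_mul_le {L : Set S} (hL : IsCompact L) (q h : C(S, ℂ)) (hh : ∀ y ∈ L, ‖h y‖ < 1)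
    {ε : ℝ} (hε : 0 < ε) : ∃ n : ℕ, ∀ y ∈ L, ‖q y‖ * ‖h y‖ ^ n ≤ ε := by
  obtain rfl | hne := L.eq_empty_or_nonempty
  · simp
  obtain ⟨y₀, hy₀, hmax⟩ := hL.exists_isMaxOn hne h.continuous.norm.continuousOn
  obtain ⟨M, hM⟩ := hL.exists_bound_of_continuousOn q.continuous.continuousOn
  have hlim : Filter.Tendsto (fun n : ℕ => M * ‖h y₀‖ ^ n) Filter.atTop (nhds 0) := by
    simpa using (tendsto_pow_atTop_nhds_zero_of_lt_one (norm_nonneg _) (hh y₀ hy₀)).const_mul M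
  obtain ⟨n, hn⟩ := (hlim.eventually_le_const hε).exists
  refine ⟨n, fun y hy => le_trans ?_ hn⟩
  exact mul_le_mul (hM y hy) (pow_le_pow_left₀ (norm_nonneg _) (hmax hy) n) (by positivity)
    ((norm_nonneg _).trans (hM y hy))

theorem mem_algHull_of_peak [T2Space E] [CompactSpace S] {x : S} (hx : x.1 ∈ algHull A K)
    (hK : IsCompact K) (hKS : K ⊆ S) {h : C(S, ℂ)} (hh : h ∈ uniformClosureOn A S) (hhx : h x = 1)
    (hle : ∀ y : S, y.1 ∈ K → ‖h y‖ ≤ 1) (hlt : ∀ y : S, y.1 ∈ K → y.1 ∉ K' → ‖h y‖ < 1) :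
    x.1 ∈ algHull A K' := by
  intro q hq C hC hqC
  refine le_of_forall_pos_le_add fun ε hε => ?_
  have hL : IsCompact {y : S | y.1 ∈ K ∧ C + ε ≤ ‖q y‖} :=
    ((hK.isClosed.preimage continuous_subtype_val).inter
      (isClosed_le continuous_const (q.restrict S).continuous.norm)).isCompact
  obtain ⟨n, hn⟩ := exists_pow_mul_le hL (q.restrict S) h
    (fun y hy => hlt y hy.1 fun hy' => by linarith [hqC y hy', hy.2]) (ε := C + ε) (by positivity)
  have hmem : q.restrict S * h ^ n ∈ uniformClosureOn A S :=
    mul_mem (restrict_mem_uniformClosureOn hq S) (pow_mem hh n)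
  have hbound := norm_le_of_mem_algHull hx hKS hmem (C := C + ε) (by positivity) fun y hy => ?_
  · simpa [hhx] using hbound
  · rw [ContinuousMap.mul_apply, ContinuousMap.pow_apply, norm_mul, norm_pow]
    rcases le_total (C + ε) ‖q y‖ with hqy | hqy
    · exact hn y ⟨hy, hqy⟩
    · exact (mul_le_of_le_one_right (norm_nonneg _)
        (pow_le_one₀ (norm_nonneg _) (hle y hy))).trans hqy

theorem ne_ofReal_of_mem_algHull {x : E} (hx : x ∈ algHull A K) (hK : IsCompact K) {p : C(E, ℂ)}
    (hp : p ∈ A) {δ : ℝ} (hpK : ∀ s : ℝ, δ ≤ s → ∀ y ∈ K, p y ≠ s) : p x ≠ δ := by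
  intro hpx
  have : CompactSpace K := isCompact_iff_compactSpace.mp hK
  -- If `p x = δ`, a polynomial close to `(δ - p)⁻¹` on `K` would contradict `x ∈ algHull A K`.
  let a : uniformClosureOn A K := ⟨p.restrict K, restrict_mem_uniformClosureOn hp K⟩
  obtain ⟨i, hi⟩ := (isUnit_ofReal_sub (a := a) fun s hs y => hpK s hs y y.2).exists_right_inv
  have hi_apply (y : K) : ((δ : ℂ) - p y) * i.1 y = 1 :=
    congrArg (fun f : uniformClosureOn A K => f.1 y) hi
  set M : ℝ := ‖(algebraMap ℂ _ (δ : ℂ) - a).1‖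
  have hM : 0 ≤ M := norm_nonneg _
  obtain ⟨f, hf, hfi⟩ := exists_norm_sub_lt_of_mem_uniformClosureOn i.2
    (ε := 1 / (2 * (M + 1))) (by positivity)
  have hmem : (algebraMap ℂ C(E, ℂ) δ - p) * f - 1 ∈ A :=
    sub_mem (mul_mem (sub_mem (A.algebraMap_mem δ) hp) hf) (one_mem A)
  have hhalf := hx _ hmem (1 / 2) (by norm_num) fun y hy => ?_
  · norm_num [hpx] at hhalf
  · have hMy : ‖(δ : ℂ) - p y‖ ≤ M := (algebraMap ℂ _ (δ : ℂ) - a).1.norm_coe_le_norm ⟨y, hy⟩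
    calc ‖((δ : ℂ) - p y) * f y - 1‖ = ‖(δ : ℂ) - p y‖ * ‖f y - i.1 ⟨y, hy⟩‖ := by
          rw [← norm_mul, mul_sub, hi_apply ⟨y, hy⟩]
      _ ≤ (M + 1) * (1 / (2 * (M + 1))) := by
          exact mul_le_mul (by linarith) (hfi ⟨y, hy⟩).le (norm_nonneg _) (by positivity)
      _ = 1 / 2 := by field_simp

theorem avoids_pos_of_mem_algHull {x : E} (hx : x ∈ algHull A K) (hK : IsCompact K) {p : C(E, ℂ)}
    (hp : p ∈ A) (hpK : ∀ s : ℝ, 0 < s → ∀ y ∈ K, p y ≠ s) (s : ℝ) (hs : 0 < s) : p x ≠ s :=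
  ne_ofReal_of_mem_algHull hx hK hp fun s' hs' => hpK s' (hs.trans_le hs')

theorem im_le_zero_of_mem_algHull {x : E} (hx : x ∈ algHull A K) (hK : IsCompact K) {f : C(E, ℂ)}
    (hf : f ∈ A) (hfK : ∀ y ∈ K, (f y).im = 0) : (f x).im ≤ 0 := by
  by_contra! hpos
  have hmem : (-I) • (f - algebraMap ℂ C(E, ℂ) (f x).re) ∈ A :=
    A.smul_mem (sub_mem hf (A.algebraMap_mem _)) _
  refine avoids_pos_of_mem_algHull hx hK hmem (fun s hs y hy h => ?_) _ hpos ?_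
  · have hre := congrArg re h
    exact hs.ne (by simpa [hfK y hy] using hre)
  · apply Complex.ext <;> simp

theorem im_eq_zero_of_mem_algHull {x : E} (hx : x ∈ algHull A K) (hK : IsCompact K) {f : C(E, ℂ)}
    (hf : f ∈ A) (hfK : ∀ y ∈ K, (f y).im = 0) : (f x).im = 0 := by
  refine le_antisymm (im_le_zero_of_mem_algHull hx hK hf hfK) ?_
  simpa using im_le_zero_of_mem_algHull hx hK (neg_mem hf) (by simpa using hfK)

theorem eq_conj_of_mem_algHull {x : E} (hx : x ∈ algHull A K) (hK : IsCompact K) {f g : C(E, ℂ)}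
    (hf : f ∈ A) (hg : g ∈ A) (hfg : ∀ y ∈ K, g y = conj (f y)) : g x = conj (f x) := by
  have him := im_eq_zero_of_mem_algHull hx hK (add_mem hf hg) fun y hy => by simp [hfg y hy]
  have hre := im_eq_zero_of_mem_algHull hx hK (A.smul_mem (sub_mem hf hg) I) fun y hy => by
    simp [hfg y hy]
  simp only [ContinuousMap.add_apply, add_im] at him
  simp only [ContinuousMap.smul_apply, ContinuousMap.sub_apply, smul_eq_mul, I_mul_im,
    sub_re] at hre
  apply Complex.ext
  · rw [conj_re]; linarith
  · rw [conj_im]; linarith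

theorem exp_subalgebra_apply {X : Type*} [TopologicalSpace X] [CompactSpace X]
    {B : Subalgebra ℂ C(X, ℂ)} [CompleteSpace B] (g : B) (y : X) :
    (NormedSpace.exp g).1 y = exp (g.1 y) := by
  let eval : B →ₐ[ℂ] ℂ := (ContinuousMap.evalAlgHom ℂ ℂ y).comp B.val
  have heval : Continuous eval := (continuous_eval_const y).comp continuous_subtype_val
  rw [exp_eq_exp_ℂ]
  exact NormedSpace.map_exp_of_mem_ball (𝕂 := ℂ) eval heval g
    ((NormedSpace.expSeries_radius_eq_top ℂ B).symm ▸ edist_lt_top _ _)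

theorem mem_algHull_zeros [T2Space E] {x : E} (hx : x ∈ algHull A K) (hK : IsCompact K)
    {p : C(E, ℂ)} (hp : p ∈ A) (hpK : ∀ s : ℝ, 0 < s → ∀ y ∈ K, p y ≠ s) (hpx : p x = 0) :
    x ∈ algHull A {y ∈ K | p y = 0} := by
  have : CompactSpace ↥(insert x K) := isCompact_iff_compactSpace.mp (hK.insert x)
  let B := uniformClosureOn A (insert x K)
  let a : B := ⟨p.restrict _, restrict_mem_uniformClosureOn hp _⟩
  obtain ⟨g, hga, hgre⟩ := exists_sq_eq_neg_of_avoids_pos (a := a) fun s hs y => by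
    rcases y.2 with hyx | hyK
    · exact fun h => hs.ne (ofReal_injective (by simpa [a, hyx, hpx] using h))
    · exact hpK s hs y hyK
  have hga_apply (y : ↥(insert x K)) : g.1 y ^ 2 = -p y := congrArg (fun f : B => f.1 y) hga
  have hexp (y : ↥(insert x K)) : (NormedSpace.exp (-g)).1 y = exp (-g.1 y) :=
    exp_subalgebra_apply (-g) y
  have hnorm (y : ↥(insert x K)) : ‖(NormedSpace.exp (-g)).1 y‖ = Real.exp (-(g.1 y).re) := by
    rw [hexp, norm_exp, neg_re]
  refine mem_algHull_of_peak (x := ⟨x, K.mem_insert x⟩) hx hK (K.subset_insert x)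
    (NormedSpace.exp (-g)).2 ?_ (fun y _ => ?_) fun y hyK hy => ?_
  · have hgx : g.1 ⟨x, K.mem_insert x⟩ = 0 := by simpa [hpx] using hga_apply ⟨x, K.mem_insert x⟩
    rw [hexp, hgx, neg_zero, exp_zero]
  · rw [hnorm, Real.exp_le_one_iff, neg_nonpos]
    exact hgre y
  · rw [hnorm, Real.exp_lt_one_iff, neg_lt_zero]
    refine (hgre y).lt_of_ne fun hre => hy ⟨hyK, ?_⟩
    have hpy : p y = (((g.1 y).im ^ 2 : ℝ) : ℂ) := by
      rw [← neg_eq_iff_eq_neg.mpr (hga_apply y)]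
      apply Complex.ext <;> simp [sq, ← hre]
    have him : (g.1 y).im ^ 2 = 0 :=
      (sq_nonneg _).antisymm' (not_lt.mp fun hpos => hpK _ hpos y hyK hpy)
    rw [hpy, him, ofReal_zero]

end Hulls

section Kallin

/-- For `ξ = exp (iθ)` with `0 < θ < π / 2`, the open sector `|arg ζ| < θ`. -/
def wedge (ξ : ℂ) : Set ℂ := {ζ | (conj ξ * ζ).im < 0 ∧ 0 < (ξ * ζ).im}

/-- For `ξ = exp (iθ)` with `0 < θ < π / 2`, the complement of the closed sector `|arg ζ| ≤ θ`. -/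
def wedgeExterior (ξ : ℂ) : Set ℂ := {ζ | 0 < (conj ξ * ζ).im ∨ (ξ * ζ).im < 0}

variable {ξ ζ a b : ℂ}

theorem zero_notMem_wedge : (0 : ℂ) ∉ wedge ξ := by
  simp [wedge]

theorem zero_notMem_wedgeExterior : (0 : ℂ) ∉ wedgeExterior ξ := by
  simp [wedgeExterior]

theorem avoids_pos_iff_wedge (hre : 0 < ξ.re) (him : 0 < ξ.im) :
    (∀ s : ℝ, 0 < s → ξ * ζ ≠ s ∧ conj ξ * ζ ≠ s) ↔
      ζ = 0 ∨ ζ ∈ wedge ξ ∨ ζ ∈ wedgeExterior ξ := by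
  simp only [wedge, wedgeExterior, Set.mem_ofPred_eq, mul_re, mul_im, conj_re, conj_im, ne_eq,
    Complex.ext_iff, ofReal_re, ofReal_im, zero_re, zero_im]
  constructor
  · intro havoid
    by_contra! ⟨hne, hwedge, hext₁, hext₂⟩
    have hx : 0 < ζ.re := by
      rcases (show 0 ≤ ζ.re by nlinarith).eq_or_lt with hx | hx
      · rw [← hx] at hext₁ hext₂
        exact absurd (by nlinarith : ζ.im = 0) (hne hx.symm)
      · exact hx
    rcases hext₁.lt_or_eq with hlt | heq
    · have hy : ζ.im < 0 := by nlinarith [hwedge hlt, mul_pos him hx]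
      exact (havoid (ξ.re * ζ.re - ξ.im * ζ.im)
        (by linarith [mul_pos hre hx, mul_pos him (neg_pos.mpr hy)])).1
        ⟨rfl, le_antisymm (hwedge hlt) hext₂⟩
    · have hy : 0 < ζ.im := by nlinarith [mul_pos him hx]
      exact (havoid (ξ.re * ζ.re - -ξ.im * ζ.im)
        (by linarith [mul_pos hre hx, mul_pos him hy])).2 ⟨rfl, heq⟩
  · rintro (⟨hx, hy⟩ | ⟨hlt, hgt⟩ | hext) s hs
    · simp [hx, hy, hs.ne]
    · exact ⟨fun h => hgt.ne' h.2, fun h => hlt.ne h.2⟩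
    · refine ⟨fun ⟨hs', h0⟩ => ?_, fun ⟨hs', h0⟩ => ?_⟩
      · have hx : ζ.re < 0 := by rcases hext with h | h <;> nlinarith [hs', h0]
        have hy : 0 < ζ.im := by nlinarith [h0]
        linarith [mul_neg_of_pos_of_neg hre hx, mul_pos him hy]
      · have hx : ζ.re < 0 := by rcases hext with h | h <;> nlinarith [hs', h0]
        have hy : ζ.im < 0 := by nlinarith [h0]
        linarith [mul_neg_of_pos_of_neg hre hx, mul_neg_of_pos_of_neg him hy]

theorem re_pos_and_im_pos_of_im_sq_pos (hre : 0 ≤ a.re) (h : 0 < (a ^ 2).im) :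
    0 < a.re ∧ 0 < a.im := by
  have hprod : 0 < a.re * a.im := by
    rw [sq, mul_im] at h
    linarith
  have him : 0 < a.im := pos_of_mul_pos_right hprod hre
  exact ⟨pos_of_mul_pos_left hprod him.le, him⟩

theorem re_pos_and_im_neg_of_im_sq_neg (hre : 0 ≤ a.re) (h : (a ^ 2).im < 0) :
    0 < a.re ∧ a.im < 0 := by
  simpa using re_pos_and_im_pos_of_im_sq_pos (a := conj a) hre (by simpa [← map_pow] using h)

theorem mul_eq_or_eq_neg_of_sq_eq (hξ : ‖ξ‖ = 1) (ha : a ^ 2 = -(ξ * ζ))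
    (hb : b ^ 2 = -(conj ξ * ζ)) : a * b = ζ ∨ a * b = -ζ := by
  rw [← sq_eq_sq_iff_eq_or_eq_neg, mul_pow, ha, hb, neg_mul_neg, mul_mul_mul_comm, mul_conj']
  simp [hξ, sq]

theorem mul_eq_of_mem_wedge (him : 0 < ξ.im) (hξ : ‖ξ‖ = 1)
    (ha : a ^ 2 = -(ξ * ζ)) (hb : b ^ 2 = -(conj ξ * ζ)) (hare : 0 ≤ a.re) (hbre : 0 ≤ b.re)
    (hζ : ζ ∈ wedge ξ) : a * b = ζ := by
  have hζre : 0 < ζ.re := by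
    have := hζ.1.trans hζ.2
    simp only [mul_im, conj_re, conj_im] at this
    nlinarith
  obtain ⟨hare', haim⟩ := re_pos_and_im_neg_of_im_sq_neg hare (by rw [ha, neg_im]; linarith [hζ.2])
  obtain ⟨hbre', hbim⟩ := re_pos_and_im_pos_of_im_sq_pos hbre (by rw [hb, neg_im]; linarith [hζ.1])
  have hab : 0 < (a * b).re := by
    rw [mul_re]
    nlinarith [mul_pos hare' hbre', mul_pos (neg_pos.mpr haim) hbim]
  refine (mul_eq_or_eq_neg_of_sq_eq hξ ha hb).resolve_right fun hneg => ?_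
  rw [hneg, neg_re] at hab
  linarith

theorem mul_eq_neg_of_mem_wedgeExterior (hre : 0 < ξ.re) (him : 0 < ξ.im) (hξ : ‖ξ‖ = 1)
    (ha : a ^ 2 = -(ξ * ζ)) (hb : b ^ 2 = -(conj ξ * ζ)) (hare : 0 ≤ a.re) (hbre : 0 ≤ b.re)
    (hζ : ζ ∈ wedgeExterior ξ) : a * b = -ζ := by
  refine (mul_eq_or_eq_neg_of_sq_eq hξ ha hb).resolve_left fun hab => ?_
  rcases hζ with hζ | hζ
  · obtain ⟨hbre', hbim⟩ := re_pos_and_im_neg_of_im_sq_neg hbre (by rw [hb, neg_im]; linarith)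
    have ha0 : a ≠ 0 := by
      rintro rfl
      simp [← hab] at hζ
    have hab' : a = -(ξ * b) := mul_left_cancel₀ ha0 (by linear_combination ha + ξ * hab)
    have := congrArg re hab'
    rw [neg_re, mul_re] at this
    nlinarith [mul_pos hre hbre', mul_pos him (neg_pos.mpr hbim)]
  · obtain ⟨hare', haim⟩ := re_pos_and_im_pos_of_im_sq_pos hare (by rw [ha, neg_im]; linarith)
    have hb0 : b ≠ 0 := by
      rintro rfl
      simp [← hab] at hζ
    have hab' : b = -(conj ξ * a) :=
      mul_left_cancel₀ hb0 (by linear_combination hb + conj ξ * hab)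
    have := congrArg re hab'
    rw [neg_re, mul_re, conj_re, conj_im] at this
    nlinarith [mul_pos hre hare', mul_pos him haim]

variable {E : Type*} [TopologicalSpace E] {A : Subalgebra ℂ C(E, ℂ)}

theorem exists_wedge_switch {S : Set E} [CompactSpace S] (hre : 0 < ξ.re) (him : 0 < ξ.im)
    (hξ : ‖ξ‖ = 1) {p : C(E, ℂ)} (hp : p ∈ A)
    (hpS : ∀ y ∈ S, p y = 0 ∨ p y ∈ wedge ξ ∨ p y ∈ wedgeExterior ξ) :
    ∃ q ∈ uniformClosureOn A S, ∀ y : S,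
      (p y = 0 → q y = 0) ∧ (p y ∈ wedge ξ → q y = p y) ∧ (p y ∈ wedgeExterior ξ → q y = -p y) := by
  have avoid (y : S) := (avoids_pos_iff_wedge hre him).mpr (hpS y y.2)
  let P : uniformClosureOn A S := ⟨p.restrict S, restrict_mem_uniformClosureOn hp S⟩
  obtain ⟨a, ha, hare⟩ := exists_sq_eq_neg_of_avoids_pos (a := ξ • P)
    fun s hs y => (avoid y s hs).1
  obtain ⟨b, hb, hbre⟩ := exists_sq_eq_neg_of_avoids_pos (a := conj ξ • P)
    fun s hs y => (avoid y s hs).2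
  have ha_apply (y : S) : a.1 y ^ 2 = -(ξ * p y) :=
    congrArg (fun f : uniformClosureOn A S => f.1 y) ha
  have hb_apply (y : S) : b.1 y ^ 2 = -(conj ξ * p y) :=
    congrArg (fun f : uniformClosureOn A S => f.1 y) hb
  refine ⟨(a * b).1, (a * b).2, fun y => ⟨fun h0 => ?_, ?_, ?_⟩⟩
  · have ha0 : a.1 y = 0 := by simpa [h0] using ha_apply y
    exact mul_eq_zero_of_left ha0 _
  · exact mul_eq_of_mem_wedge him hξ (ha_apply y) (hb_apply y) (hare y) (hbre y)
  · exact mul_eq_neg_of_mem_wedgeExterior hre him hξ (ha_apply y) (hb_apply y) (hare y) (hbre y)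

theorem algHull_union_subset_of_wedge [T2Space E] (hre : 0 < ξ.re) (him : 0 < ξ.im) (hξ : ‖ξ‖ = 1)
    {p : C(E, ℂ)} (hp : p ∈ A) {K₁ K₂ : Set E} (hK : IsCompact (K₁ ∪ K₂))
    (h₁ : ∀ y ∈ K₁, p y = 0 ∨ p y ∈ wedge ξ) (h₂ : ∀ y ∈ K₂ \ K₁, p y ∈ wedgeExterior ξ) :
    algHull A (K₁ ∪ K₂) ⊆ algHull A K₁ ∪ algHull A K₂ := by
  intro x hx
  have hK_cases (y : E) (hy : y ∈ K₁ ∪ K₂) : p y = 0 ∨ p y ∈ wedge ξ ∨ p y ∈ wedgeExterior ξ := by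
    by_cases hy₁ : y ∈ K₁
    · exact (h₁ y hy₁).imp_right Or.inl
    · exact .inr (.inr (h₂ y ⟨hy.resolve_left hy₁, hy₁⟩))
  have avoid (y : E) (hy : y ∈ K₁ ∪ K₂) := (avoids_pos_iff_wedge hre him).mpr (hK_cases y hy)
  have hx_cases : p x = 0 ∨ p x ∈ wedge ξ ∨ p x ∈ wedgeExterior ξ :=
    (avoids_pos_iff_wedge hre him).mp fun s hs =>
      ⟨avoids_pos_of_mem_algHull hx hK (A.smul_mem hp ξ)
          (fun s hs y hy => (avoid y hy s hs).1) s hs,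
        avoids_pos_of_mem_algHull hx hK (A.smul_mem hp (conj ξ))
          (fun s hs y hy => (avoid y hy s hs).2) s hs⟩
  have : CompactSpace ↥(insert x (K₁ ∪ K₂)) := isCompact_iff_compactSpace.mp (hK.insert x)
  obtain ⟨q, hq, hpq⟩ := exists_wedge_switch hre him hξ hp (S := insert x (K₁ ∪ K₂)) <| by
    rintro y (rfl | hy)
    exacts [hx_cases, hK_cases y hy]
  have hpS := restrict_mem_uniformClosureOn hp (insert x (K₁ ∪ K₂))
  let x' : ↥(insert x (K₁ ∪ K₂)) := ⟨x, Set.mem_insert x _⟩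
  rcases hx_cases with hx0 | hxw | hxe
  · refine .inl (algHull_mono (fun y hy => ?_) (mem_algHull_zeros hx hK (A.smul_mem hp ξ)
      (fun s hs y hy => (avoid y hy s hs).1) (by simp [hx0])))
    have hpy : p y = 0 := (mul_eq_zero.mp hy.2).resolve_left fun hξ0 => by simp [hξ0] at hξ
    by_contra hy₁
    exact zero_notMem_wedgeExterior (hpy ▸ h₂ y ⟨hy.1.resolve_left hy₁, hy₁⟩)
  · refine .inl (mem_algHull_of_eq_zero_off (x := x') hx (Set.subset_insert x _)
      (add_mem hpS hq) ?_ fun y hy hy₁ => ?_)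
    · have hpx : p x ≠ 0 := fun h0 => zero_notMem_wedge (h0 ▸ hxw)
      simpa [(hpq x').2.1 hxw, ← two_mul] using hpx
    · have hye := h₂ y ⟨hy.resolve_left hy₁, hy₁⟩
      simp [(hpq y).2.2 hye]
  · refine .inr (mem_algHull_of_eq_zero_off (x := x') hx (Set.subset_insert x _)
      (sub_mem hpS hq) ?_ fun y hy hy₂ => ?_)
    · have hpx : p x ≠ 0 := fun h0 => zero_notMem_wedgeExterior (h0 ▸ hxe)
      simpa [(hpq x').2.2 hxe, ← two_mul] using hpx
    · rcases h₁ y (hy.resolve_right hy₂) with hy0 | hyw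
      · simp [(hpq y).1 hy0, hy0]
      · simp [(hpq y).2.1 hyw]

end Kallin

section PolynomialHull

/-- A polynomial in two variables as a continuous function on `ℂ²`. -/
noncomputable def polyFun : MvPolynomial (Fin 2) ℂ →ₐ[ℂ] C(ℂ × ℂ, ℂ) :=
  MvPolynomial.aeval fun i => if i = 0 then ContinuousMap.fst else ContinuousMap.snd

/-- The algebra of holomorphic polynomials on `ℂ²`, as continuous functions. -/
noncomputable def polyAlg : Subalgebra ℂ C(ℂ × ℂ, ℂ) :=
  polyFun.range

theorem polyFun_apply (p : MvPolynomial (Fin 2) ℂ) (z : ℂ × ℂ) :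
    polyFun p z = MvPolynomial.eval (fun i => if i = 0 then z.1 else z.2) p := by
  have hhom : (ContinuousMap.evalAlgHom ℂ ℂ z).comp polyFun =
      MvPolynomial.aeval fun i : Fin 2 => if i = 0 then z.1 else z.2 :=
    MvPolynomial.algHom_ext fun i => by fin_cases i <;> simp [polyFun]
  simpa [MvPolynomial.aeval_eq_eval] using DFunLike.congr_fun hhom p

theorem fst_mem_polyAlg : ContinuousMap.fst ∈ polyAlg :=
  ⟨MvPolynomial.X 0, by simp [polyFun]⟩

theorem snd_mem_polyAlg : ContinuousMap.snd ∈ polyAlg :=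
  ⟨MvPolynomial.X 1, by simp [polyFun]⟩

theorem polyHull2_eq_algHull {K : Set (ℂ × ℂ)} (hK : IsCompact K) :
    polyHull2 K = algHull polyAlg K := by
  ext x
  simp only [polyHull2, ← polyFun_apply]
  constructor
  · rintro hx _ ⟨p, rfl⟩ C hC hpC
    exact (hx p).trans (Real.sSup_le (Set.forall_mem_image.mpr hpC) hC)
  · intro hx p
    have hbdd : BddAbove ((fun w => ‖polyFun p w‖) '' K) :=
      hK.bddAbove_image (polyFun p).continuous.norm.continuousOn
    exact hx _ ⟨p, rfl⟩ _ (Real.sSup_nonneg (Set.forall_mem_image.mpr fun _ _ => norm_nonneg _))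
      fun y hy => le_csSup hbdd (Set.mem_image_of_mem _ hy)

theorem isCompact_eClosedBall (r : ℝ) : IsCompact (eClosedBall r) := by
  refine Metric.isCompact_of_isClosed_isBounded (isClosed_le (by fun_prop) (by fun_prop))
    (isBounded_iff_forall_norm_le.mpr ⟨|r|, fun z hz => ?_⟩)
  have hz' : ‖z.1‖ ^ 2 + ‖z.2‖ ^ 2 ≤ r ^ 2 := hz
  exact max_le (abs_norm z.1 ▸ sq_le_sq.mp (by nlinarith [sq_nonneg ‖z.2‖]))
    (abs_norm z.2 ▸ sq_le_sq.mp (by nlinarith [sq_nonneg ‖z.1‖]))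

theorem mem_eClosedBall_of_mem_algHull {K : Set (ℂ × ℂ)} {r : ℝ} (hK : K ⊆ eClosedBall r)
    {x : ℂ × ℂ} (hx : x ∈ algHull polyAlg K) : x ∈ eClosedBall r := by
  set N : ℝ := ‖x.1‖ ^ 2 + ‖x.2‖ ^ 2 with hN
  have hmem : conj x.1 • ContinuousMap.fst + conj x.2 • ContinuousMap.snd ∈ polyAlg :=
    add_mem (polyAlg.smul_mem fst_mem_polyAlg _) (polyAlg.smul_mem snd_mem_polyAlg _)
  have hle := hx _ hmem √(N * r ^ 2) (Real.sqrt_nonneg _) fun y hy => ?_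
  · have hval : conj x.1 * x.1 + conj x.2 * x.2 = (N : ℂ) := by
      rw [conj_mul', conj_mul', hN]
      push_cast
      rfl
    have hN0 : 0 ≤ N := by positivity
    have hNr : N ≤ √(N * r ^ 2) := by simpa [hval, abs_of_nonneg hN0] using hle
    change N ≤ r ^ 2
    have hsq : N ^ 2 ≤ N * r ^ 2 := (Real.le_sqrt hN0 (by positivity)).mp hNr
    nlinarith [sq_nonneg r]
  · have hy' : ‖y.1‖ ^ 2 + ‖y.2‖ ^ 2 ≤ r ^ 2 := hK hy
    refine Real.le_sqrt_of_sq_le ?_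
    calc ‖conj x.1 * y.1 + conj x.2 * y.2‖ ^ 2 ≤ (‖x.1‖ * ‖y.1‖ + ‖x.2‖ * ‖y.2‖) ^ 2 := by
          gcongr
          simpa using norm_add_le (conj x.1 * y.1) (conj x.2 * y.2)
      _ ≤ N * (‖y.1‖ ^ 2 + ‖y.2‖ ^ 2) := by
          nlinarith [sq_nonneg (‖x.1‖ * ‖y.2‖ - ‖x.2‖ * ‖y.1‖)]
      _ ≤ N * r ^ 2 := by gcongr

end PolynomialHull

section KallinForm

/-- The primitive twelfth root of unity `exp (iπ/6)`. -/
noncomputable def twelfthRoot : ℂ := ⟨√3 / 2, 1 / 2⟩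

/-- The primitive cube root of unity `exp (2πi/3)`. -/
noncomputable def cubeRoot : ℂ := ⟨-1 / 2, √3 / 2⟩

/-- The quadratic form used to separate the planes `plane t ν` by Kallin's lemma. The
variable `s` stands for `w + t⁻¹ z`, in which these planes become `s = ν (z̄ + t⁻¹ z)`. -/
noncomputable def kallinForm (k t : ℝ) (z s : ℂ) : ℂ :=
  k * (t⁻¹ - t) * z ^ 2 + (1 - 2 * k) * (z * s) + k * t * s ^ 2

theorem norm_twelfthRoot : ‖twelfthRoot‖ = 1 := by
  rw [← sq_eq_sq₀ (norm_nonneg _) zero_le_one, Complex.sq_norm, normSq_apply, twelfthRoot]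
  linarith [Real.sq_sqrt (show (0 : ℝ) ≤ 3 by norm_num)]

theorem norm_cubeRoot : ‖cubeRoot‖ = 1 := by
  rw [← sq_eq_sq₀ (norm_nonneg _) zero_le_one, Complex.sq_norm, normSq_apply, cubeRoot]
  linarith [Real.sq_sqrt (show (0 : ℝ) ≤ 3 by norm_num)]

theorem cubeRoot_sq : cubeRoot ^ 2 = conj cubeRoot := by
  have h3 : √3 * √3 = 3 := Real.mul_self_sqrt (by norm_num)
  apply Complex.ext <;> simp only [cubeRoot, sq, mul_re, mul_im, conj_re, conj_im] <;> linarith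

variable {k t : ℝ} {z s : ℂ}

theorem conj_kallinForm : conj (kallinForm k t z s) = kallinForm k t (conj z) (conj s) := by
  simp [kallinForm, conj_ofNat]

theorem norm_sq_add_re_mul_sq_pos {c : ℂ} (hc : ‖c‖ < 1) (hz : z ≠ 0) :
    0 < ‖z‖ ^ 2 + (c * z ^ 2).re := by
  have hlt : ‖c * z ^ 2‖ < ‖z‖ ^ 2 := by
    rw [norm_mul, norm_pow]
    exact mul_lt_of_lt_one_left (by positivity) hc
  linarith [neg_le_of_abs_le (abs_re_le_norm (c * z ^ 2))]

theorem im_conj_twelfthRoot_mul_kallinForm (ht : t ≠ 0) :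
    (conj twelfthRoot * kallinForm k t z (conj z + t⁻¹ * z)).im =
      -(‖z‖ ^ 2 + ((⟨t⁻¹, -√3 * (2 * k * t - t⁻¹)⟩ : ℂ) * z ^ 2).re) / 2 := by
  have hform : kallinForm k t z (conj z + t⁻¹ * z) =
      ‖z‖ ^ 2 + (t⁻¹ - k * t) * z ^ 2 + k * t * conj z ^ 2 := by
    have hinv : (t : ℂ) * (t⁻¹ : ℝ) = 1 := by exact_mod_cast mul_inv_cancel₀ ht
    rw [← mul_conj', kallinForm]
    linear_combination k * (2 * z * conj z + (t⁻¹ : ℝ) * z ^ 2) * hinv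
  rw [hform, Complex.sq_norm, ← ofReal_pow, Complex.sq_norm, normSq_apply, twelfthRoot]
  simp only [mul_im, mul_re, add_im, add_re, sub_re, sub_im, sq, ofReal_re, ofReal_im, conj_re,
    conj_im]
  ring

theorem im_conj_twelfthRoot_mul_kallinForm_cubeRoot (ht : t ≠ 0) :
    (conj twelfthRoot * kallinForm k t z (cubeRoot * (conj z + t⁻¹ * z))).im =
      (1 - 3 * k) * (‖z‖ ^ 2 + ((t⁻¹ : ℝ) * z ^ 2).re) := by
  have hform : kallinForm k t z (cubeRoot * (conj z + t⁻¹ * z)) =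
      (1 - 2 * k) * cubeRoot * (‖z‖ ^ 2 + t⁻¹ * z ^ 2) + k * (t⁻¹ - t) * z ^ 2 +
        k * conj cubeRoot * (t * conj z ^ 2 + 2 * ‖z‖ ^ 2 + t⁻¹ * z ^ 2) := by
    have hinv : (t : ℂ) * (t⁻¹ : ℝ) = 1 := by exact_mod_cast mul_inv_cancel₀ ht
    rw [← mul_conj', ← cubeRoot_sq, kallinForm]
    linear_combination k * cubeRoot ^ 2 * (2 * z * conj z + (t⁻¹ : ℝ) * z ^ 2) * hinv
  have h3 : √3 ^ 2 = 3 := Real.sq_sqrt (by norm_num)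
  rw [hform, ← ofReal_pow, Complex.sq_norm, normSq_apply, twelfthRoot, cubeRoot]
  simp only [mul_im, mul_re, add_im, add_re, sub_re, sub_im, sq, ofReal_re, ofReal_im, conj_re,
    conj_im, one_re, one_im, re_ofNat, im_ofNat]
  linear_combination ((1 - 2 * k) * (z.re ^ 2 + z.im ^ 2 + t⁻¹ * (z.re ^ 2 - z.im ^ 2)) -
    k * (t * (z.re ^ 2 - z.im ^ 2) + 2 * (z.re ^ 2 + z.im ^ 2) +
      t⁻¹ * (z.re ^ 2 - z.im ^ 2))) / 4 * h3

theorem kallinForm_mem_wedge (ht : t ≠ 0) (hk : t⁻¹ ^ 2 + 3 * (2 * k * t - t⁻¹) ^ 2 < 1)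
    (hz : z ≠ 0) : kallinForm k t z (conj z + t⁻¹ * z) ∈ wedge twelfthRoot := by
  have hc : ‖(⟨t⁻¹, -√3 * (2 * k * t - t⁻¹)⟩ : ℂ)‖ < 1 := by
    rw [← sq_lt_one_iff₀ (norm_nonneg _), Complex.sq_norm, normSq_mk]
    linear_combination hk + (2 * k * t - t⁻¹) ^ 2 * Real.sq_sqrt (show (0 : ℝ) ≤ 3 by norm_num)
  have him {z : ℂ} (hz : z ≠ 0) :
      (conj twelfthRoot * kallinForm k t z (conj z + t⁻¹ * z)).im < 0 := by
    rw [im_conj_twelfthRoot_mul_kallinForm ht]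
    linarith [norm_sq_add_re_mul_sq_pos hc hz]
  refine ⟨him hz, ?_⟩
  have := him (z := conj z) (by simpa using hz)
  rw [← neg_pos, ← conj_im] at this
  simpa [conj_kallinForm] using this

theorem kallinForm_mem_wedgeExterior (ht : t ≠ 0) (ht1 : t⁻¹ ^ 2 < 1) (hk : k < 1 / 3) (hz : z ≠ 0)
    {ν : ℂ} (hν : ν = cubeRoot ∨ ν = conj cubeRoot) :
    kallinForm k t z (ν * (conj z + t⁻¹ * z)) ∈ wedgeExterior twelfthRoot := by
  have hc : ‖((t⁻¹ : ℝ) : ℂ)‖ < 1 := by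
    rwa [← sq_lt_one_iff₀ (norm_nonneg _), norm_real, Real.norm_eq_abs, sq_abs]
  have him {z : ℂ} (hz : z ≠ 0) :
      0 < (conj twelfthRoot * kallinForm k t z (cubeRoot * (conj z + t⁻¹ * z))).im := by
    rw [im_conj_twelfthRoot_mul_kallinForm_cubeRoot ht]
    exact mul_pos (by linarith) (norm_sq_add_re_mul_sq_pos hc hz)
  rcases hν with rfl | rfl
  · exact .inl (him hz)
  · right
    have := him (z := conj z) (by simpa using hz)
    rw [← neg_pos, ← conj_im]
    simpa [conj_kallinForm] using this

theorem ne_zero_of_lt_sq (ht : (15 - √33) / 8 < t ^ 2) : t ≠ 0 := by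
  have h33 : √33 < 15 := (Real.sqrt_lt' (by norm_num)).mpr (by norm_num)
  exact sq_pos_iff.mp (by linarith)

theorem exists_kallin_parameter (ht : (15 - √33) / 8 < t ^ 2) :
    ∃ k < 1 / 3, t⁻¹ ^ 2 + 3 * (2 * k * t - t⁻¹) ^ 2 < 1 := by
  have h33 : √33 ^ 2 = 33 := Real.sq_sqrt (by norm_num)
  have h33_gt : 3 < √33 := Real.lt_sqrt_of_sq_lt (by norm_num)
  have ht0 := ne_zero_of_lt_sq ht
  rcases lt_or_ge (3 / 2) (t ^ 2) with hlarge | hsmall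
  · refine ⟨1 / (2 * t ^ 2), ?_, ?_⟩
    · rw [div_lt_div_iff₀ (by positivity) (by norm_num)]
      linarith
    · have hcancel : 2 * (1 / (2 * t ^ 2)) * t - t⁻¹ = 0 := by
        field_simp
        ring
      rw [hcancel, inv_pow]
      simpa using inv_lt_one_of_one_lt₀ (by linarith : 1 < t ^ 2)
  · have hlim : t⁻¹ ^ 2 + 3 * (2 * (1 / 3) * t - t⁻¹) ^ 2 < 1 := by
      have hquad : 4 * (t ^ 2) ^ 2 - 15 * t ^ 2 + 12 < 0 := by nlinarith
      have hid : t⁻¹ ^ 2 + 3 * (2 * (1 / 3) * t - t⁻¹) ^ 2 - 1 =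
          (4 * (t ^ 2) ^ 2 - 15 * t ^ 2 + 12) / (3 * t ^ 2) := by
        field_simp
        ring
      linarith [div_neg_of_neg_of_pos hquad (by positivity : 0 < 3 * t ^ 2)]
    have hcont : Continuous fun k : ℝ => t⁻¹ ^ 2 + 3 * (2 * k * t - t⁻¹) ^ 2 := by fun_prop
    have hnear : ∀ᶠ k in nhdsWithin (1 / 3 : ℝ) (Set.Iio (1 / 3)),
        t⁻¹ ^ 2 + 3 * (2 * k * t - t⁻¹) ^ 2 < 1 :=
      nhdsWithin_le_nhds (hcont.continuousAt.eventually_lt_const hlim)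
    exact (hnear.and self_mem_nhdsWithin).exists.imp fun _ => And.symm

end KallinForm

section Planes

/-- The real plane `w + t⁻¹ z = ν (z̄ + t⁻¹ z)` in `ℂ²`. The planes `P₀ᵗ, P₁ᵗ, P₂ᵗ` are those with
`ν = 1, exp (2πi/3), exp (-2πi/3)`. -/
noncomputable def plane (t : ℝ) (ν : ℂ) : Set (ℂ × ℂ) :=
  {y | y.2 + t⁻¹ * y.1 = ν * (conj y.1 + t⁻¹ * y.1)}

variable {t : ℝ} {ν ν' ρ : ℂ} {y : ℂ × ℂ}

theorem P0_eq_plane : P0 = plane t 1 := by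
  ext y
  simp [P0, plane]

theorem ofReal_sqrt_three_mul_self : (√3 : ℂ) * √3 = 3 := by
  rw [← ofReal_mul, Real.mul_self_sqrt (by norm_num), ofReal_ofNat]

theorem P1_eq_plane (ht : t ≠ 0) : P1 t = plane t cubeRoot := by
  have hroot : cubeRoot = (-1 + I * √3) / 2 := by
    apply Complex.ext <;> simp [cubeRoot]
  have ht' : (t : ℂ) ≠ 0 := ofReal_ne_zero.mpr ht
  have hcoeff : -((√3 : ℂ) * (√3 - I) / (2 * t)) = -(3 - I * √3) / 2 * (t : ℂ)⁻¹ := by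
    rw [mul_sub, ofReal_sqrt_three_mul_self]
    field_simp
  ext y
  simp only [P1, plane, Set.mem_ofPred_eq, hroot, hcoeff, ofReal_inv]
  constructor <;> intro h <;> linear_combination h

theorem P2_eq_plane (ht : t ≠ 0) : P2 t = plane t (conj cubeRoot) := by
  have hroot : conj cubeRoot = (-1 - I * √3) / 2 := by
    apply Complex.ext <;> simp [cubeRoot, neg_div]
  have ht' : (t : ℂ) ≠ 0 := ofReal_ne_zero.mpr ht
  have hcoeff : -((√3 : ℂ) * (√3 + I) / (2 * t)) = -(3 + I * √3) / 2 * (t : ℂ)⁻¹ := by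
    rw [mul_add, ofReal_sqrt_three_mul_self]
    field_simp
  ext y
  simp only [P2, plane, Set.mem_ofPred_eq, hroot, hcoeff, ofReal_inv]
  constructor <;> intro h <;> linear_combination h

theorem isClosed_plane (t : ℝ) (ν : ℂ) : IsClosed (plane t ν) :=
  isClosed_eq (by fun_prop) (by fun_prop)

theorem isCompact_plane_inter_eClosedBall (t r : ℝ) (ν : ℂ) :
    IsCompact (plane t ν ∩ eClosedBall r) :=
  (isCompact_eClosedBall r).inter_left (isClosed_plane t ν)

theorem mem_plane_of_fst_eq_zero (hy : y ∈ plane t ν) (h0 : y.1 = 0) : y ∈ plane t ν' := by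
  simpa [plane, h0] using hy

theorem mul_mem_plane (hy : y ∈ plane t ν) :
    ρ * (y.2 + t⁻¹ * y.1) = ρ * ν * (conj y.1 + t⁻¹ * y.1) := by
  rw [mul_assoc, ← show _ = _ from hy]

theorem algHull_plane_inter_eClosedBall_subset (t r : ℝ) (hν : ‖ν‖ = 1) :
    algHull polyAlg (plane t ν ∩ eClosedBall r) ⊆ plane t ν ∩ eClosedBall r := by
  intro x hx
  refine ⟨?_, mem_eClosedBall_of_mem_algHull Set.inter_subset_right hx⟩
  have hconj : conj ν * ν = 1 := by simp [conj_mul', hν]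
  let g : C(ℂ × ℂ, ℂ) := conj ν • (ContinuousMap.snd + ((t⁻¹ : ℝ) : ℂ) • ContinuousMap.fst) -
    ((t⁻¹ : ℝ) : ℂ) • ContinuousMap.fst
  have hg : g ∈ polyAlg :=
    sub_mem (polyAlg.smul_mem
      (add_mem snd_mem_polyAlg (polyAlg.smul_mem fst_mem_polyAlg _)) _)
      (polyAlg.smul_mem fst_mem_polyAlg _)
  have hg_apply (y : ℂ × ℂ) : g y = conj y.1 ↔ y ∈ plane t ν := by
    change conj ν * (y.2 + (t⁻¹ : ℝ) * y.1) - (t⁻¹ : ℝ) * y.1 = conj y.1 ↔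
      y.2 + (t⁻¹ : ℝ) * y.1 = ν * (conj y.1 + (t⁻¹ : ℝ) * y.1)
    constructor <;> intro h
    · linear_combination ν * h - (y.2 + (t⁻¹ : ℝ) * y.1) * hconj
    · linear_combination conj ν * h + (conj y.1 + (t⁻¹ : ℝ) * y.1) * hconj
  exact (hg_apply x).mp (eq_conj_of_mem_algHull hx (isCompact_plane_inter_eClosedBall t r ν)
    fst_mem_polyAlg hg fun y hy => (hg_apply y).mpr hy.1)

theorem exists_mem_polyAlg_eq_kallinForm (k t : ℝ) (ρ : ℂ) :
    ∃ p ∈ polyAlg, ∀ y : ℂ × ℂ, p y = kallinForm k t y.1 (ρ * (y.2 + t⁻¹ * y.1)) := by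
  have hfst := fst_mem_polyAlg
  let s : C(ℂ × ℂ, ℂ) := ρ • (ContinuousMap.snd + ((t⁻¹ : ℝ) : ℂ) • ContinuousMap.fst)
  have hs : s ∈ polyAlg :=
    polyAlg.smul_mem (add_mem snd_mem_polyAlg (polyAlg.smul_mem hfst _)) _
  refine ⟨(k * (t⁻¹ - t) : ℂ) • ContinuousMap.fst ^ 2 +
    (1 - 2 * k : ℂ) • (ContinuousMap.fst * s) + (k * t : ℂ) • s ^ 2, ?_, fun y => ?_⟩
  · exact add_mem (add_mem (polyAlg.smul_mem (pow_mem hfst 2) _)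
      (polyAlg.smul_mem (mul_mem hfst hs) _)) (polyAlg.smul_mem (pow_mem hs 2) _)
  · rfl

theorem algHull_plane_union_subset (ht : (15 - √33) / 8 < t ^ 2) (r : ℝ) (hν : ‖ν‖ = 1)
    (hρ : ρ * ν = 1) {K : Set (ℂ × ℂ)} (hK : IsCompact K) (hKr : K ⊆ eClosedBall r)
    (hplane : ∀ y ∈ K, ∃ ν', (ρ * ν' = cubeRoot ∨ ρ * ν' = conj cubeRoot) ∧ y ∈ plane t ν') :
    algHull polyAlg ((plane t ν ∩ eClosedBall r) ∪ K) ⊆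
      (plane t ν ∩ eClosedBall r) ∪ algHull polyAlg K := by
  obtain ⟨k, hk3, hk⟩ := exists_kallin_parameter ht
  have ht0 := ne_zero_of_lt_sq ht
  have ht1 : t⁻¹ ^ 2 < 1 := by nlinarith [sq_nonneg (2 * k * t - t⁻¹)]
  obtain ⟨p, hp, hp_apply⟩ := exists_mem_polyAlg_eq_kallinForm k t ρ
  refine (algHull_union_subset_of_wedge (ξ := twelfthRoot) (by simp [twelfthRoot])
    (by simp [twelfthRoot]) norm_twelfthRoot hp
    ((isCompact_plane_inter_eClosedBall t r ν).union hK) ?_ ?_).trans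
    (Set.union_subset_union_left _ (algHull_plane_inter_eClosedBall_subset t r hν))
  · rintro y ⟨hy, -⟩
    rw [hp_apply, mul_mem_plane hy, hρ, one_mul]
    by_cases h0 : y.1 = 0
    · left
      simp [h0, kallinForm]
    · exact .inr (kallinForm_mem_wedge ht0 hk h0)
  · rintro y ⟨hyK, hy⟩
    obtain ⟨ν', hν', hyν'⟩ := hplane y hyK
    have h0 : y.1 ≠ 0 := fun h0 => hy ⟨mem_plane_of_fst_eq_zero hyν' h0, hKr hyK⟩
    rw [hp_apply, mul_mem_plane hyν']
    exact kallinForm_mem_wedgeExterior ht0 ht1 hk3 h0 hν'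

theorem algHull_three_planes_subset (ht : (15 - √33) / 8 < t ^ 2) (r : ℝ) :
    algHull polyAlg ((plane t 1 ∩ eClosedBall r) ∪ ((plane t cubeRoot ∩ eClosedBall r) ∪
        (plane t (conj cubeRoot) ∩ eClosedBall r))) ⊆
      (plane t 1 ∩ eClosedBall r) ∪ ((plane t cubeRoot ∩ eClosedBall r) ∪
        (plane t (conj cubeRoot) ∩ eClosedBall r)) := by
  have hconj : conj cubeRoot * cubeRoot = 1 := by simp [conj_mul', norm_cubeRoot]
  have hconj_sq : conj cubeRoot * conj cubeRoot = cubeRoot := by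
    rw [← map_mul, ← sq, cubeRoot_sq, conj_conj]
  have hcompact := isCompact_plane_inter_eClosedBall t r
  refine (algHull_plane_union_subset ht r norm_one (one_mul 1)
    ((hcompact _).union (hcompact _)) ?_ ?_).trans (Set.union_subset_union_right _
      ((algHull_plane_union_subset ht r norm_cubeRoot hconj (hcompact _)
        Set.inter_subset_right ?_).trans (Set.union_subset_union_right _
          (algHull_plane_inter_eClosedBall_subset t r (by simpa using norm_cubeRoot)))))
  · exact Set.union_subset Set.inter_subset_right Set.inter_subset_right
  · rintro y (hy | hy)
    exacts [⟨_, .inl (one_mul _), hy.1⟩, ⟨_, .inr (one_mul _), hy.1⟩]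
  · exact fun y hy => ⟨_, .inl hconj_sq, hy.1⟩

theorem lt_sq_of_sqrt_div_lt_abs (ht : √(15 - √33) / (2 * √2) < |t|) : (15 - √33) / 8 < t ^ 2 := by
  have h33 : 0 ≤ 15 - √33 := by
    have : √33 ≤ 15 := Real.sqrt_le_iff.mpr ⟨by norm_num, by norm_num⟩
    linarith
  rw [← sq_abs t]
  calc (15 - √33) / 8 = (√(15 - √33) / (2 * √2)) ^ 2 := by
        rw [div_pow, mul_pow, Real.sq_sqrt h33, Real.sq_sqrt (by norm_num)]
        norm_num
    _ < |t| ^ 2 := pow_lt_pow_left₀ ht (by positivity) two_ne_zero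

end Planes

theorem stmt_2_general (t : ℝ) (ht : √(15 - √33) / (2 * √2) < |t|) (r : ℝ) :
    PolyConvex2 ((P0 ∪ P1 t ∪ P2 t) ∩ eClosedBall r) := by
  have ht2 := lt_sq_of_sqrt_div_lt_abs ht
  have ht0 := ne_zero_of_lt_sq ht2
  have hcompact := isCompact_plane_inter_eClosedBall t r
  rw [P0_eq_plane (t := t), P1_eq_plane ht0, P2_eq_plane ht0, Set.union_inter_distrib_right,
    Set.union_inter_distrib_right, Set.union_assoc, PolyConvex2,
    polyHull2_eq_algHull ((hcompact _).union ((hcompact _).union (hcompact _)))]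
  exact (algHull_three_planes_subset ht2 r).antisymm (subset_algHull _)

/-- for `t > √(15 − √33)/(2√2)`, `P₀ᵗ ∪ P₁ᵗ ∪ P₂ᵗ` is locally polynomially
convex at the origin. -/
theorem stmt_2 (t : ℝ) (ht : Real.sqrt (15 - Real.sqrt 33) / (2 * Real.sqrt 2) < t) :
    ∃ r > (0 : ℝ), PolyConvex2 ((P0 ∪ P1 t ∪ P2 t) ∩ eClosedBall r) :=
  ⟨1, one_pos, stmt_2_general t (ht.trans_le (le_abs_self t)) 1⟩
end

section
/- For every t with 0 < t < 1 and every r > 0, the compact set (P₀ᵗ ∪ P₁ᵗ ∪ P₂ᵗ) ∩ B̄(0;r) is not polynomially convex; in particular P₀ᵗ ∪ P₁ᵗ ∪ P₂ᵗ is not locally polynomially convex at the origin. -/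
open Complex ComplexConjugate

/-!
In the coordinates `z` and `u = z + t w` the three planes become `u ^ 3 = (z + t z̄) ^ 3`. For a
polynomial `p`, the sum of `p (z, ζ u)` over the cube roots of unity `ζ` is a polynomial in `z` and
`u ^ 3`, so the hull contains a point off the planes as soon as there are bounded holomorphic
functions `Z`, `h` on the right half-plane with `h = (Z + t Z̄) ^ 3` on the imaginary axis and
`h = 0`, `Z ≠ 0` at an interior point.

Gegenbauer functions supply such a pair. Let `F a y = ∫ e^{dx} (y + cosh x)^{-a} dx` with `d` real
or imaginary and put `Z = κ F a`. On the axis `conj (F a y) = F a (-y)`, so for a suitable phase of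
`κ` the function `Z + t Z̄` is `κ (F a y - |t| F a (-y))`, a solution of the Gegenbauer equation.
When `|t| cos (π d) = cos (π a)` it is a multiple of the solution `(1 - y²)^{1/2 - a} F (1 - a) y`.
With `1/2 - a = 1/3` its cube extends to the half-plane as a multiple of
`h = (1 - y²) F (1 - a) y ^ 3`, which vanishes at `y = 1`. The same argument applies to the `m`
planes `u ^ m = (z + t z̄) ^ m`, with `1/2 - a = 1/m`.
-/

open MeasureTheory Filter Topology
open scoped Real

section GegenbauerKernel

lemma integrable_exp_neg_mul_abs {b : ℝ} (hb : 0 < b) :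
    Integrable fun x : ℝ => Real.exp (-b * |x|) := by
  have hcont : Continuous fun x : ℝ => Real.exp (-b * |x|) := by fun_prop
  refine hcont.locallyIntegrable.integrable_of_isBigO_atTop_of_norm_isNegInvariant
    (g := fun x => Real.exp (-b * x)) (ae_of_all _ fun x => by simp) ?_
    ⟨Set.Ioi 0, Ioi_mem_atTop 0, exp_neg_integrableOn_Ioi 0 hb⟩
  refine EventuallyEq.isBigO ?_
  filter_upwards [eventually_ge_atTop 0] with x hx
  rw [abs_of_nonneg hx]

/-- The integrand `e^{dx} (y + cosh x)^{-a}` of `gegenbauerIntegral`. -/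
noncomputable def gegenbauerKernel (d : ℂ) (a : ℝ) (y : ℂ) (x : ℝ) : ℂ :=
  exp (d * x) * (y + Real.cosh x) ^ (-(a : ℂ))

/-- The Gegenbauer function `y ↦ ∫ e^{dx} (y + cosh x)^{-a} dx`, an integral which converges for
`|Re d| < a` and `Re y > -1`. It solves the Gegenbauer equation of order `a` and degree `-a ± d`,
written in the variable `-y`. -/
noncomputable def gegenbauerIntegral (d : ℂ) (a : ℝ) (y : ℂ) : ℂ :=
  ∫ x : ℝ, gegenbauerKernel d a y x

variable {d : ℂ} {a c : ℝ} {y : ℂ}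

lemma mul_exp_abs_div_two_le_re_add_cosh (hc0 : 0 ≤ c) (hc1 : c ≤ 1) (hy : c - 1 ≤ y.re) (x : ℝ) :
    c * Real.exp |x| / 2 ≤ (y + Real.cosh x).re := by
  have hexp : Real.exp |x| ≤ 2 * Real.cosh x := by
    rw [Real.cosh_eq]
    linarith [Real.exp_abs_le x]
  rw [add_re, ofReal_re]
  nlinarith [Real.one_le_cosh x]

lemma add_cosh_mem_slitPlane (hy : -1 < y.re) (x : ℝ) : y + Real.cosh x ∈ slitPlane := by
  refine Or.inl ?_
  rw [add_re, ofReal_re]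
  linarith [Real.one_le_cosh x]

lemma norm_add_cosh_cpow_le (ha : 0 ≤ a) (hc0 : 0 < c) (hc1 : c ≤ 1) (hy : c - 1 ≤ y.re) (x : ℝ) :
    ‖(y + Real.cosh x) ^ (-(a : ℂ))‖ ≤ (2 / c) ^ a * Real.exp (-a * |x|) := by
  have hle : c / 2 * Real.exp |x| ≤ ‖y + Real.cosh x‖ := by
    linarith [mul_exp_abs_div_two_le_re_add_cosh hc0.le hc1 hy x, re_le_norm (y + Real.cosh x)]
  calc ‖(y + Real.cosh x) ^ (-(a : ℂ))‖ = ‖y + Real.cosh x‖ ^ (-a) := by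
        rw [← ofReal_neg, norm_cpow_real]
    _ ≤ (c / 2 * Real.exp |x|) ^ (-a) :=
        Real.rpow_le_rpow_of_nonpos (by positivity) hle (neg_nonpos.2 ha)
    _ = (2 / c) ^ a * Real.exp (-a * |x|) := by
        rw [Real.mul_rpow (by positivity) (Real.exp_pos _).le, ← Real.exp_mul,
          Real.rpow_neg (by positivity), ← Real.inv_rpow (by positivity), inv_div,
          mul_comm |x|]

lemma norm_exp_mul_ofReal_le (d : ℂ) (x : ℝ) : ‖exp (d * x)‖ ≤ Real.exp (|d.re| * |x|) := by
  rw [norm_exp, re_mul_ofReal, ← abs_mul]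
  exact Real.exp_le_exp.2 (le_abs_self _)

lemma norm_gegenbauerKernel_le (ha : 0 ≤ a) (hc0 : 0 < c) (hc1 : c ≤ 1) (hy : c - 1 ≤ y.re)
    (x : ℝ) :
    ‖gegenbauerKernel d a y x‖ ≤ (2 / c) ^ a * Real.exp (-(a - |d.re|) * |x|) := by
  calc ‖gegenbauerKernel d a y x‖
      ≤ Real.exp (|d.re| * |x|) * ((2 / c) ^ a * Real.exp (-a * |x|)) := by
        rw [gegenbauerKernel, norm_mul]
        gcongr
        exacts [norm_exp_mul_ofReal_le d x, norm_add_cosh_cpow_le ha hc0 hc1 hy x]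
    _ = (2 / c) ^ a * Real.exp (-(a - |d.re|) * |x|) := by
        rw [mul_left_comm, ← Real.exp_add]
        ring_nf

lemma continuous_gegenbauerKernel (d : ℂ) (a : ℝ) (hy : -1 < y.re) :
    Continuous (gegenbauerKernel d a y) := by
  refine Continuous.mul (by fun_prop) (Continuous.cpow ?_ continuous_const
    fun x => add_cosh_mem_slitPlane hy x)
  exact continuous_const.add (continuous_ofReal.comp Real.continuous_cosh)

lemma integrable_gegenbauerKernel (ha : |d.re| < a) (hy : -1 < y.re) :
    Integrable (gegenbauerKernel d a y) := by
  have hc0 : 0 < min 1 (1 + y.re) := lt_min one_pos (by linarith)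
  have hcy : min 1 (1 + y.re) - 1 ≤ y.re := by linarith [min_le_right 1 (1 + y.re)]
  exact ((integrable_exp_neg_mul_abs (sub_pos.2 ha)).const_mul _).mono'
    (continuous_gegenbauerKernel d a hy).aestronglyMeasurable
    (ae_of_all _ (norm_gegenbauerKernel_le ((abs_nonneg _).trans ha.le) hc0 (min_le_left _ _) hcy))

lemma add_cosh_mul_gegenbauerKernel (d : ℂ) (a : ℝ) (hy : -1 < y.re) (x : ℝ) :
    (y + Real.cosh x) * gegenbauerKernel d (a + 1) y x = gegenbauerKernel d a y x := by
  have hne := slitPlane_ne_zero (add_cosh_mem_slitPlane hy x)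
  rw [gegenbauerKernel, gegenbauerKernel, ofReal_add, ofReal_one, neg_add', cpow_sub _ _ hne,
    cpow_one]
  field_simp

lemma hasDerivAt_gegenbauerKernel_left (d : ℂ) (a : ℝ) (hy : -1 < y.re) (x : ℝ) :
    HasDerivAt (fun y => gegenbauerKernel d a y x) (-a * gegenbauerKernel d (a + 1) y x) y := by
  have hbase : HasDerivAt (fun y : ℂ => y + (Real.cosh x : ℂ)) 1 y := (hasDerivAt_id y).add_const _
  refine ((hbase.cpow_const (add_cosh_mem_slitPlane hy x)).const_mul _).congr_deriv ?_
  rw [gegenbauerKernel, ofReal_add, ofReal_one, neg_add']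
  ring

lemma hasDerivAt_gegenbauerKernel_right (d : ℂ) (a : ℝ) (hy : -1 < y.re) (x : ℝ) :
    HasDerivAt (gegenbauerKernel d a y)
      (d * gegenbauerKernel d a y x - a * Real.sinh x * gegenbauerKernel d (a + 1) y x) x := by
  have hexp : HasDerivAt (fun x : ℝ => exp (d * x)) (exp (d * x) * d) x := by
    simpa using ((hasDerivAt_id (x : ℂ)).const_mul d).cexp.comp_ofReal
  have hcosh : HasDerivAt (fun x : ℝ => y + (Real.cosh x : ℂ)) (Real.sinh x) x :=
    (Real.hasDerivAt_cosh x).ofReal_comp.const_add y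
  have hpow := (hasStrictDerivAt_cpow_const (c := -(a : ℂ))
    (add_cosh_mem_slitPlane hy x)).hasDerivAt.comp x hcosh
  refine (hexp.mul hpow).congr_deriv ?_
  simp only [gegenbauerKernel, ofReal_add, ofReal_one, neg_add', Function.comp_apply]
  ring

end GegenbauerKernel

section GegenbauerIntegral

variable {d : ℂ} {a b : ℝ} {y : ℂ}

lemma hasDerivAt_gegenbauerIntegral (ha : |d.re| < a) (hy : -1 < y.re) :
    HasDerivAt (gegenbauerIntegral d a) (-a * gegenbauerIntegral d (a + 1) y) y := by
  have ha0 : 0 ≤ a := (abs_nonneg _).trans ha.le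
  obtain ⟨c, hc0, hc⟩ : ∃ c : ℝ, 0 < c ∧ c < min 1 (1 + y.re) :=
    exists_between (lt_min one_pos (by linarith))
  obtain ⟨hc1, hcy⟩ := lt_min_iff.1 hc
  have hnhds : {z : ℂ | c - 1 < z.re} ∈ 𝓝 y :=
    (isOpen_lt continuous_const continuous_re).mem_nhds (by simpa using by linarith)
  have hre {z : ℂ} (hz : c - 1 < z.re) : -1 < z.re := by linarith
  have hderiv := hasDerivAt_integral_of_dominated_loc_of_deriv_le (μ := volume)
    (F := gegenbauerKernel d a) (F' := fun z x => -a * gegenbauerKernel d (a + 1) z x)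
    (bound := fun x => a * ((2 / c) ^ (a + 1) * Real.exp (-(a + 1 - |d.re|) * |x|))) hnhds
    (by filter_upwards [hnhds] with z hz
        exact (continuous_gegenbauerKernel d a (hre hz)).aestronglyMeasurable)
    (integrable_gegenbauerKernel ha hy)
    ((continuous_gegenbauerKernel d (a + 1) hy).aestronglyMeasurable.const_mul _)
    (ae_of_all _ fun x z hz => by
      rw [norm_mul, norm_neg, Complex.norm_of_nonneg ha0]
      gcongr
      exact norm_gegenbauerKernel_le (by linarith) hc0 hc1.le (le_of_lt hz) x)
    (((integrable_exp_neg_mul_abs (by linarith)).const_mul _).const_mul _)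
    (ae_of_all _ fun x z hz => hasDerivAt_gegenbauerKernel_left d a (hre hz) x)
  exact hderiv.2.congr_deriv (integral_const_mul _ _)

lemma differentiableOn_gegenbauerIntegral (ha : |d.re| < a) :
    DifferentiableOn ℂ (gegenbauerIntegral d a) {y | -1 < y.re} := fun _ hy =>
  (hasDerivAt_gegenbauerIntegral ha hy).differentiableAt.differentiableWithinAt

lemma gegenbauerKernel_add (d : ℂ) (a b : ℝ) (hy : -1 < y.re) (x : ℝ) :
    gegenbauerKernel d (a + b) y x =
      gegenbauerKernel d a y x * (y + Real.cosh x) ^ (-(b : ℂ)) := by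
  rw [gegenbauerKernel, gegenbauerKernel, ofReal_add, neg_add,
    cpow_add _ _ (slitPlane_ne_zero (add_cosh_mem_slitPlane hy x)), mul_assoc]

lemma norm_add_one_le_norm_add_cosh (hy : -1 ≤ y.re) (x : ℝ) :
    ‖y + 1‖ ≤ ‖y + Real.cosh x‖ := by
  rw [norm_def, norm_def]
  refine Real.sqrt_le_sqrt ?_
  simp only [normSq_apply, add_re, add_im, ofReal_re, ofReal_im, one_re, one_im]
  nlinarith [Real.one_le_cosh x]

lemma norm_gegenbauerIntegral_add_le (ha : |d.re| < a) (hb : 0 ≤ b) :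
    ∃ C, ∀ y : ℂ, 0 ≤ y.re → ‖gegenbauerIntegral d (a + b) y‖ ≤ C * ‖y + 1‖ ^ (-b) := by
  refine ⟨∫ x : ℝ, (2 / 1) ^ a * Real.exp (-(a - |d.re|) * |x|), fun y hy => ?_⟩
  have hy' : -1 < y.re := by linarith
  have hy1 : 0 < ‖y + 1‖ := norm_pos_iff.2 fun h => by simp [eq_neg_of_add_eq_zero_left h] at hy'
  rw [← integral_mul_const]
  refine norm_integral_le_of_norm_le
    (((integrable_exp_neg_mul_abs (sub_pos.2 ha)).const_mul _).mul_const _)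
    (ae_of_all _ fun x => ?_)
  rw [gegenbauerKernel_add d a b hy', norm_mul, ← ofReal_neg, norm_cpow_real]
  exact mul_le_mul
    (norm_gegenbauerKernel_le ((abs_nonneg _).trans ha.le) one_pos le_rfl (by simpa using hy) x)
    (Real.rpow_le_rpow_of_nonpos hy1 (norm_add_one_le_norm_add_cosh hy'.le x) (neg_nonpos.2 hb))
    (by positivity) (by positivity)

lemma gegenbauerIntegral_neg (d : ℂ) (a : ℝ) (y : ℂ) :
    gegenbauerIntegral (-d) a y = gegenbauerIntegral d a y := by
  rw [gegenbauerIntegral, gegenbauerIntegral, ← integral_neg_eq_self]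
  simp only [gegenbauerKernel, Real.cosh_neg, ofReal_neg, neg_mul_neg]

lemma conj_gegenbauerIntegral (d : ℂ) (a : ℝ) (hy : -1 < y.re) :
    conj (gegenbauerIntegral d a y) = gegenbauerIntegral (conj d) a (conj y) := by
  rw [gegenbauerIntegral, gegenbauerIntegral, ← integral_conj]
  congr with x
  have harg := (mem_slitPlane_iff_arg.1 (add_cosh_mem_slitPlane hy x)).1
  rw [gegenbauerKernel, gegenbauerKernel, map_mul, ← exp_conj, map_mul, conj_ofReal,
    ← conj_ofReal (Real.cosh x), ← map_add, Complex.conj_cpow _ _ harg, map_neg, conj_ofReal,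
    conj_ofReal]

lemma sinh_mul_gegenbauerKernel (d : ℂ) (a : ℝ) (y : ℂ) (x : ℝ) :
    Real.sinh x * gegenbauerKernel d a y x =
      (gegenbauerKernel (d + 1) a y x - gegenbauerKernel (d - 1) a y x) / 2 := by
  simp only [gegenbauerKernel, ofReal_sinh, Complex.sinh, add_mul, one_mul, sub_eq_add_neg,
    neg_mul, exp_add]
  ring

lemma integrable_sinh_mul_gegenbauerKernel (ha : |d.re| + 1 < a) (hy : -1 < y.re) :
    Integrable fun x : ℝ => Real.sinh x * gegenbauerKernel d a y x := by
  have hadd : |(d + 1).re| < a := by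
    simpa using (abs_add_le d.re 1).trans_lt (by simpa using ha)
  have hsub : |(d - 1).re| < a := by
    simpa using (abs_sub d.re 1).trans_lt (by simpa using ha)
  simp only [sinh_mul_gegenbauerKernel]
  exact ((integrable_gegenbauerKernel hadd hy).sub
    (integrable_gegenbauerKernel hsub hy)).div_const 2

-- The primitive whose vanishing at infinity gives the Gegenbauer equation.
lemma hasDerivAt_gegenbauerKernel_primitive (d : ℂ) (a : ℝ) (hy : -1 < y.re) (x : ℝ) :
    HasDerivAt
      (fun x : ℝ => d * gegenbauerKernel d a y x +
        a * (Real.sinh x * gegenbauerKernel d (a + 1) y x))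
      ((d ^ 2 - a ^ 2) * gegenbauerKernel d a y x +
        a * (2 * a + 1) * y * gegenbauerKernel d (a + 1) y x +
        a * (a + 1) * (1 - y ^ 2) * gegenbauerKernel d (a + 2) y x) x := by
  have hsinh : HasDerivAt (fun x : ℝ => (Real.sinh x : ℂ)) (Real.cosh x) x :=
    (Real.hasDerivAt_sinh x).ofReal_comp
  refine (((hasDerivAt_gegenbauerKernel_right d a hy x).const_mul d).add
    ((hsinh.mul (hasDerivAt_gegenbauerKernel_right d (a + 1) hy x)).const_mul _)).congr_deriv ?_
  have hsq : (Real.sinh x : ℂ) ^ 2 = Real.cosh x ^ 2 - 1 := by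
    rw [ofReal_sinh, ofReal_cosh, Complex.cosh_sq, add_sub_cancel_right]
  rw [← add_cosh_mul_gegenbauerKernel d a hy, ← add_cosh_mul_gegenbauerKernel d (a + 1) hy,
    add_assoc a 1 1, one_add_one_eq_two, ofReal_add, ofReal_one]
  linear_combination -(a * (a + 1) * gegenbauerKernel d (a + 2) y x) * hsq

lemma gegenbauerIntegral_recurrence (ha : |d.re| < a) (hy : -1 < y.re) :
    (d ^ 2 - a ^ 2) * gegenbauerIntegral d a y +
      a * (2 * a + 1) * y * gegenbauerIntegral d (a + 1) y +
      a * (a + 1) * (1 - y ^ 2) * gegenbauerIntegral d (a + 2) y = 0 := by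
  have h0 := integrable_gegenbauerKernel ha hy
  have h1 := integrable_gegenbauerKernel (d := d) (a := a + 1) (by linarith) hy
  have h2 := integrable_gegenbauerKernel (d := d) (a := a + 2) (by linarith) hy
  have hsinh := integrable_sinh_mul_gegenbauerKernel (d := d) (a := a + 1) (by linarith) hy
  have hzero := integral_eq_zero_of_hasDerivAt_of_integrable
    (hasDerivAt_gegenbauerKernel_primitive d a hy)
    (((h0.const_mul _).add (h1.const_mul _)).add (h2.const_mul _))
    ((h0.const_mul d).add (hsinh.const_mul _))
  rw [integral_add, integral_add, integral_const_mul, integral_const_mul,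
    integral_const_mul] at hzero
  exacts [hzero, h0.const_mul _, h1.const_mul _, (h0.const_mul _).add (h1.const_mul _),
    h2.const_mul _]

end GegenbauerIntegral

section SpecialValues

lemma betaIntegral_eq_integral_sigmoid (u v : ℂ) :
    betaIntegral u v = ∫ x : ℝ, (Real.sigmoid x : ℂ) ^ u * (Real.sigmoid (-x) : ℂ) ^ v := by
  have hcov := integral_image_eq_integral_abs_deriv_smul MeasurableSet.univ
    (fun x _ => (Real.hasDerivAt_sigmoid x).hasDerivWithinAt) Real.sigmoid_injective.injOn
    (fun x : ℝ => (x : ℂ) ^ (u - 1) * (1 - (x : ℂ)) ^ (v - 1))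
  rw [Set.image_univ, Real.range_sigmoid, Measure.restrict_univ] at hcov
  rw [betaIntegral, intervalIntegral.integral_of_le zero_le_one, integral_Ioc_eq_integral_Ioo, hcov]
  congr with x
  have hcpow {s : ℝ} (hs : 0 < s) (w : ℂ) : (s : ℂ) ^ (w - 1) = (s : ℂ) ^ w / s := by
    rw [cpow_sub _ _ (ofReal_ne_zero.2 hs.ne'), cpow_one]
  have hx := Real.sigmoid_pos x
  have hnx := Real.sigmoid_pos (-x)
  have hsub : 1 - (Real.sigmoid x : ℂ) = Real.sigmoid (-x) := by
    rw [Real.sigmoid_neg, ofReal_sub, ofReal_one]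
  rw [← Real.sigmoid_neg, abs_of_pos (by positivity), hcpow hx, hsub, hcpow hnx, real_smul,
    ofReal_mul]
  have hx0 := ofReal_ne_zero.2 hx.ne'
  have hnx0 := ofReal_ne_zero.2 hnx.ne'
  field_simp

lemma sigmoid_mul_sigmoid_neg (x : ℝ) :
    Real.sigmoid x * Real.sigmoid (-x) = (2 * (1 + Real.cosh x))⁻¹ := by
  rw [Real.sigmoid_def, Real.sigmoid_def, ← mul_inv, neg_neg, Real.cosh_eq]
  congr 1
  linear_combination (Real.exp_add (-x) x).symm.trans (by rw [neg_add_cancel, Real.exp_zero])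

lemma sigmoid_cpow_add_mul_sigmoid_neg_cpow_sub (u d : ℂ) (x : ℝ) :
    (Real.sigmoid x : ℂ) ^ (u + d) * (Real.sigmoid (-x) : ℂ) ^ (u - d) =
      exp (d * x) * ((2 * (1 + Real.cosh x))⁻¹ : ℝ) ^ u := by
  have hx := Real.sigmoid_pos x
  have hnx := Real.sigmoid_pos (-x)
  have hx0 := ofReal_ne_zero.2 hx.ne'
  have hnx0 := ofReal_ne_zero.2 hnx.ne'
  have hratio : (Real.sigmoid x : ℂ) ^ d = (Real.sigmoid (-x) : ℂ) ^ d * exp (d * x) := by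
    rw [← neg_neg x, ← Real.sigmoid_mul_rexp_neg, neg_neg, ofReal_mul,
      mul_cpow_ofReal_nonneg hnx.le (Real.exp_pos x).le,
      cpow_def_of_ne_zero (ofReal_ne_zero.2 (Real.exp_pos x).ne'), ← ofReal_log (Real.exp_pos x).le,
      Real.log_exp, mul_comm d]
  rw [← sigmoid_mul_sigmoid_neg, ofReal_mul, mul_cpow_ofReal_nonneg hx.le hnx.le,
    cpow_add _ _ hx0, cpow_sub _ _ hnx0, hratio]
  have hpow : (Real.sigmoid (-x) : ℂ) ^ d ≠ 0 := by simp [cpow_eq_zero_iff, hnx0]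
  field_simp

variable {d : ℂ} {a : ℝ}

lemma gegenbauerIntegral_one (d : ℂ) (a : ℝ) :
    gegenbauerIntegral d a 1 = 2 ^ (a : ℂ) * betaIntegral (a + d) (a - d) := by
  rw [betaIntegral_eq_integral_sigmoid, ← integral_const_mul]
  refine integral_congr_ae (ae_of_all _ fun x => ?_)
  have hcosh : 0 ≤ 1 + Real.cosh x := by linarith [Real.cosh_pos x]
  have hpow : (1 + Real.cosh x) ^ (-a) = 2 ^ a * (2 * (1 + Real.cosh x))⁻¹ ^ a := by
    rw [← Real.mul_rpow zero_le_two (by positivity), mul_inv, mul_inv_cancel_left₀ two_ne_zero,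
      Real.inv_rpow hcosh, Real.rpow_neg hcosh]
  have hpow' := congrArg ofReal hpow
  rw [ofReal_mul, ofReal_cpow hcosh, ofReal_cpow zero_le_two, ofReal_cpow (by positivity),
    ofReal_ofNat, ofReal_neg, ofReal_add, ofReal_one] at hpow'
  simp only [sigmoid_cpow_add_mul_sigmoid_neg_cpow_sub, gegenbauerKernel, hpow']
  ring

lemma gegenbauerKernel_one (d : ℂ) (a x : ℝ) :
    gegenbauerKernel d a 1 x = 2 ^ (-a : ℂ) * gegenbauerKernel (2 * d) (2 * a) 0 (x / 2) := by
  have hcosh : 1 + Real.cosh x = 2 * Real.cosh (x / 2) ^ 2 := by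
    have := Real.cosh_two_mul (x / 2)
    rw [Real.sinh_sq, mul_div_cancel₀ _ two_ne_zero] at this
    linarith
  have hpos := (Real.cosh_pos (x / 2)).le
  have hpow : (1 + Real.cosh x) ^ (-a) = 2 ^ (-a) * Real.cosh (x / 2) ^ (-(2 * a)) := by
    rw [hcosh, Real.mul_rpow zero_le_two (by positivity), ← Real.rpow_natCast_mul hpos]
    push_cast
    rw [mul_neg]
  have hpow' := congrArg ofReal hpow
  rw [ofReal_mul, ofReal_cpow (by linarith [Real.cosh_pos x]), ofReal_cpow zero_le_two,
    ofReal_cpow hpos, ofReal_ofNat, ofReal_neg, ofReal_neg, ofReal_add, ofReal_one] at hpow'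
  rw [gegenbauerKernel, gegenbauerKernel, hpow', zero_add, ofReal_div, ofReal_ofNat]
  field_simp

lemma gegenbauerIntegral_one_eq_zero_two_mul (d : ℂ) (a : ℝ) :
    gegenbauerIntegral d a 1 = 2 ^ (1 - a : ℂ) * gegenbauerIntegral (2 * d) (2 * a) 0 := by
  simp only [gegenbauerIntegral, gegenbauerKernel_one]
  rw [integral_const_mul, Measure.integral_comp_div, abs_two, real_smul, sub_eq_add_neg,
    cpow_add _ _ two_ne_zero, cpow_one, ofReal_ofNat]
  ring

lemma gegenbauerIntegral_zero (d : ℂ) (a : ℝ) :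
    gegenbauerIntegral d a 0 = 2 ^ (a - 1 : ℂ) * betaIntegral ((a + d) / 2) ((a - d) / 2) := by
  have hone := gegenbauerIntegral_one_eq_zero_two_mul (d / 2) (a / 2)
  rw [gegenbauerIntegral_one, mul_div_cancel₀ _ two_ne_zero, mul_div_cancel₀ _ two_ne_zero,
    ofReal_div, ofReal_ofNat, ← add_div, ← sub_div] at hone
  refine mul_left_cancel₀ (a := (2 : ℂ) ^ (1 - a / 2 : ℂ)) (by simp) ?_
  rw [← hone, ← mul_assoc, ← cpow_add _ _ two_ne_zero]
  ring_nf

lemma betaIntegral_ne_zero {u v : ℂ} (hu : 0 < u.re) (hv : 0 < v.re) : betaIntegral u v ≠ 0 := by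
  refine right_ne_zero_of_mul (a := Gamma (u + v)) ?_
  rw [← Gamma_mul_Gamma_eq_betaIntegral hu hv]
  exact mul_ne_zero (Gamma_ne_zero_of_re_pos hu) (Gamma_ne_zero_of_re_pos hv)

lemma gegenbauerIntegral_one_ne_zero (ha : |d.re| < a) : gegenbauerIntegral d a 1 ≠ 0 := by
  obtain ⟨hl, hr⟩ := abs_lt.1 ha
  rw [gegenbauerIntegral_one]
  exact mul_ne_zero (by simp) (betaIntegral_ne_zero (by simp; linarith) (by simp; linarith))

lemma gegenbauerIntegral_zero_ne_zero (ha : |d.re| < a) : gegenbauerIntegral d a 0 ≠ 0 := by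
  obtain ⟨hl, hr⟩ := abs_lt.1 ha
  rw [gegenbauerIntegral_zero]
  exact mul_ne_zero (by simp) (betaIntegral_ne_zero (by simp; linarith) (by simp; linarith))

lemma betaIntegral_mul_betaIntegral_one_sub {u v : ℂ} (hu0 : 0 < u.re) (hu1 : u.re < 1)
    (hv0 : 0 < v.re) (hv1 : v.re < 1) :
    Gamma (u + v) * Gamma (2 - (u + v)) * (betaIntegral u v * betaIntegral (1 - u) (1 - v)) *
      (sin (π * u) * sin (π * v)) = π ^ 2 := by
  have hrefl {w : ℂ} (hw0 : 0 < w.re) (hw1 : w.re < 1) :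
      Gamma w * Gamma (1 - w) * sin (π * w) = π := by
    have hne : Gamma w * Gamma (1 - w) ≠ 0 := mul_ne_zero (Gamma_ne_zero_of_re_pos hw0)
      (Gamma_ne_zero_of_re_pos (by simpa using hw1))
    rw [Gamma_mul_Gamma_one_sub] at hne ⊢
    exact div_mul_cancel₀ _ (div_ne_zero_iff.1 hne).2
  have huv := Gamma_mul_Gamma_eq_betaIntegral hu0 hv0
  have huv' := Gamma_mul_Gamma_eq_betaIntegral (s := 1 - u) (t := 1 - v)
    (by simpa using hu1) (by simpa using hv1)
  rw [show 1 - u + (1 - v) = 2 - (u + v) by ring] at huv'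
  calc _ = (Gamma (u + v) * betaIntegral u v) *
        (Gamma (2 - (u + v)) * betaIntegral (1 - u) (1 - v)) *
        (sin (π * u) * sin (π * v)) := by ring
    _ = (Gamma u * Gamma (1 - u) * sin (π * u)) * (Gamma v * Gamma (1 - v) * sin (π * v)) := by
      rw [← huv, ← huv']; ring
    _ = π ^ 2 := by rw [hrefl hu0 hu1, hrefl hv0 hv1, sq]

lemma gegenbauerIntegral_zero_mul_two_sub (ha : |d.re| < a) (ha' : |d.re| < 2 - a) :
    Gamma a * Gamma (2 - a) * (gegenbauerIntegral d a 0 * gegenbauerIntegral d (2 - a) 0) *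
      (cos (π * d) - cos (π * a)) = 2 * π ^ 2 := by
  obtain ⟨hl, hr⟩ := abs_lt.1 ha
  obtain ⟨hl', hr'⟩ := abs_lt.1 ha'
  have hbeta := betaIntegral_mul_betaIntegral_one_sub (u := (a + d) / 2) (v := (a - d) / 2)
    (by simp; linarith) (by simp; linarith) (by simp; linarith) (by simp; linarith)
  rw [show (a + d) / 2 + (a - d) / 2 = (a : ℂ) by ring,
    show 1 - (a + d) / 2 = ((2 - a : ℝ) - d) / 2 by push_cast; ring,
    show 1 - (a - d) / 2 = ((2 - a : ℝ) + d) / 2 by push_cast; ring] at hbeta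
  have htwo : (2 : ℂ) ^ (a - 1 : ℂ) * 2 ^ ((2 - a : ℝ) - 1 : ℂ) = 1 := by
    rw [← cpow_add _ _ two_ne_zero]
    push_cast
    ring_nf
    exact cpow_zero _
  have hsin : sin (π * ((a + d) / 2)) * sin (π * ((a - d) / 2)) =
      (cos (π * d) - cos (π * a)) / 2 := by
    rw [show (π : ℂ) * d = π * ((a + d) / 2) - π * ((a - d) / 2) by ring,
      show (π : ℂ) * a = π * ((a + d) / 2) + π * ((a - d) / 2) by ring, cos_sub, cos_add]
    ring
  rw [hsin] at hbeta
  rw [← gegenbauerIntegral_neg d (2 - a), gegenbauerIntegral_zero, gegenbauerIntegral_zero,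
    sub_neg_eq_add, ← sub_eq_add_neg]
  linear_combination 2 * hbeta + Gamma a * Gamma (2 - a) *
    (betaIntegral ((a + d) / 2) ((a - d) / 2) *
      betaIntegral (((2 - a : ℝ) - d) / 2) (((2 - a : ℝ) + d) / 2)) *
    (cos (π * d) - cos (π * a)) * htwo

lemma gegenbauerIntegral_zero_reflection (ha : |d.re| < a) (ha' : |d.re| < 1 - a) :
    a * gegenbauerIntegral d (a + 1) 0 * gegenbauerIntegral d (1 - a) 0 *
        (cos (π * d) + cos (π * a)) =
      (1 - a) * gegenbauerIntegral d (1 - a + 1) 0 * gegenbauerIntegral d a 0 *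
        (cos (π * d) - cos (π * a)) := by
  have ha0 : 0 < a := (abs_nonneg _).trans_lt ha
  have ha1 : 0 < 1 - a := (abs_nonneg _).trans_lt ha'
  have hleft := gegenbauerIntegral_zero_mul_two_sub ha (by linarith)
  have hright := gegenbauerIntegral_zero_mul_two_sub ha' (by linarith)
  have hGamma {b : ℝ} (hb : 0 < b) : Gamma b ≠ 0 :=
    Gamma_ne_zero_of_re_pos (by simpa using hb)
  have hcos : cos (π * (1 - a : ℝ)) = -cos (π * a) := by
    rw [ofReal_sub, ofReal_one, mul_sub, mul_one, cos_pi_sub]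
  rw [show (2 : ℂ) - a = (1 - a : ℝ) + 1 by push_cast; ring, show 2 - a = 1 - a + 1 by ring,
    Gamma_add_one _ (ofReal_ne_zero.2 ha1.ne')] at hleft
  rw [show (2 : ℂ) - (1 - a : ℝ) = a + 1 by push_cast; ring, show 2 - (1 - a) = a + 1 by ring,
    Gamma_add_one _ (ofReal_ne_zero.2 ha0.ne'), hcos] at hright
  refine mul_left_cancel₀ (mul_ne_zero (hGamma ha0) (hGamma ha1)) ?_
  push_cast at hleft hright ⊢
  linear_combination hright - hleft

end SpecialValues

section SecondOrderODE

variable {𝕜 : Type*} [RCLike 𝕜]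

lemma eq_of_second_order_linear_ode {p q f f' g g' : ℝ → 𝕜} {P Q : NNReal} {x₀ : ℝ}
    (hp : ∀ x, ‖p x‖₊ ≤ P) (hq : ∀ x, ‖q x‖₊ ≤ Q)
    (hf : ∀ x, HasDerivAt f (f' x) x) (hf' : ∀ x, HasDerivAt f' (p x * f' x + q x * f x) x)
    (hg : ∀ x, HasDerivAt g (g' x) x) (hg' : ∀ x, HasDerivAt g' (p x * g' x + q x * g x) x)
    (h₀ : f x₀ = g x₀) (h₀' : f' x₀ = g' x₀) : f = g := by
  let v (x : ℝ) (y : 𝕜 × 𝕜) : 𝕜 × 𝕜 := (y.2, p x * y.2 + q x * y.1)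
  have hv (x : ℝ) : LipschitzOnWith (max 1 (P + Q)) (v x) Set.univ := by
    have hsnd := (lipschitzWith_smul (p x)).comp (LipschitzWith.prod_snd (α := 𝕜) (β := 𝕜))
    have hfst := (lipschitzWith_smul (q x)).comp (LipschitzWith.prod_fst (α := 𝕜) (β := 𝕜))
    rw [mul_one] at hsnd hfst
    exact (LipschitzWith.prod_snd.prodMk
      ((hsnd.weaken (hp x)).add (hfst.weaken (hq x)))).lipschitzOnWith
  have heq : (fun x => (f x, f' x)) = fun x => (g x, g' x) :=
    ODE_solution_unique_univ hv (fun x => ⟨(hf x).prodMk (hf' x), Set.mem_univ _⟩)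
      (fun x => ⟨(hg x).prodMk (hg' x), Set.mem_univ _⟩) (t₀ := x₀) (by rw [h₀, h₀'])
  exact funext fun x => congrArg Prod.fst (congrFun heq x)

end SecondOrderODE

section ImaginaryAxis

variable {a : ℝ} {d : ℂ}

/-- `f`, with derivative `f'`, solves the Gegenbauer equation
`(1 + Y ^ 2) f'' + (2 a + 1) Y f' + (a ^ 2 - d ^ 2) f = 0` on `ℝ`, that is the equation
`(1 - y ^ 2) g'' - (2 a + 1) y g' - (a ^ 2 - d ^ 2) g = 0` for `g` along the imaginary axis
`y = Y * I`. Carrying `f'` as a second function makes this a first-order system. -/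
structure IsGegenbauerSolution (a : ℝ) (d : ℂ) (f f' : ℝ → ℂ) : Prop where
  hasDerivAt (Y : ℝ) : HasDerivAt f (f' Y) Y
  hasDerivAt' (Y : ℝ) : HasDerivAt f'
    (-((2 * a + 1) * Y * f' Y + (a ^ 2 - d ^ 2) * f Y) / (1 + Y ^ 2)) Y

lemma one_add_sq_ne_zero (Y : ℝ) : (1 + Y ^ 2 : ℂ) ≠ 0 := by
  exact_mod_cast (by positivity : (1 + Y ^ 2 : ℝ) ≠ 0)

lemma hasDerivAt_one_add_sq_rpow (b Y : ℝ) :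
    HasDerivAt (fun Y : ℝ => (((1 + Y ^ 2) ^ b : ℝ) : ℂ))
      (2 * b * Y / (1 + Y ^ 2) * ((1 + Y ^ 2) ^ b : ℝ)) Y := by
  have hpos : 0 < 1 + Y ^ 2 := by positivity
  have h := (((hasDerivAt_pow 2 Y).const_add 1).rpow_const (p := b) (.inl hpos.ne')).ofReal_comp
  refine h.congr_deriv ?_
  rw [Real.rpow_sub_one hpos.ne']
  push_cast
  ring

namespace IsGegenbauerSolution

variable {f f' g g' : ℝ → ℂ}

lemma sub (hf : IsGegenbauerSolution a d f f') (hg : IsGegenbauerSolution a d g g') :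
    IsGegenbauerSolution a d (f - g) (f' - g') where
  hasDerivAt Y := (hf.hasDerivAt Y).sub (hg.hasDerivAt Y)
  hasDerivAt' Y := ((hf.hasDerivAt' Y).sub (hg.hasDerivAt' Y)).congr_deriv (by
    simp only [Pi.sub_apply]; ring)

lemma const_smul (c : ℂ) (hf : IsGegenbauerSolution a d f f') :
    IsGegenbauerSolution a d (c • f) (c • f') where
  hasDerivAt Y := (hf.hasDerivAt Y).const_smul c
  hasDerivAt' Y := ((hf.hasDerivAt' Y).const_smul c).congr_deriv (by
    simp only [Pi.smul_apply, smul_eq_mul]; ring)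

lemma comp_neg (hf : IsGegenbauerSolution a d f f') :
    IsGegenbauerSolution a d (fun Y => f (-Y)) (fun Y => -f' (-Y)) where
  hasDerivAt Y := by
    simpa [Function.comp_def] using (hf.hasDerivAt (-Y)).scomp Y (hasDerivAt_neg Y)
  hasDerivAt' Y := by
    refine ((hf.hasDerivAt' (-Y)).scomp Y (hasDerivAt_neg Y)).neg.congr_deriv ?_
    push_cast
    simp only [neg_smul, one_smul]
    ring

lemma one_add_sq_rpow_mul (hf : IsGegenbauerSolution (1 - a) d f f') :
    IsGegenbauerSolution a d (fun Y => ((1 + Y ^ 2) ^ (1 / 2 - a) : ℝ) * f Y)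
      (fun Y => ((1 + Y ^ 2) ^ (1 / 2 - a) : ℝ) *
        (f' Y + (1 - 2 * a) * Y / (1 + Y ^ 2) * f Y)) where
  hasDerivAt Y := by
    refine ((hasDerivAt_one_add_sq_rpow _ Y).mul (hf.hasDerivAt Y)).congr_deriv ?_
    push_cast
    ring
  hasDerivAt' Y := by
    have hne := one_add_sq_ne_zero Y
    have hquot : HasDerivAt (fun Y : ℝ => (1 - 2 * a : ℂ) * Y / (1 + Y ^ 2))
        ((1 - 2 * a : ℂ) * (1 - Y ^ 2) / (1 + Y ^ 2) ^ 2) Y := by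
      have hY : HasDerivAt (fun Y : ℝ => (Y : ℂ)) 1 Y := ofRealCLM.hasDerivAt
      refine ((hY.const_mul (1 - 2 * a : ℂ)).div ((hY.pow 2).const_add 1) hne).congr_deriv ?_
      simp only [Pi.pow_apply]
      field_simp
      ring
    refine ((hasDerivAt_one_add_sq_rpow _ Y).mul
      ((hf.hasDerivAt' Y).add (hquot.mul (hf.hasDerivAt Y)))).congr_deriv ?_
    push_cast
    simp only [Pi.add_apply, Pi.mul_apply]
    field_simp
    ring

lemma eq_of_initial_eq (hf : IsGegenbauerSolution a d f f') (hg : IsGegenbauerSolution a d g g')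
    (h : f 0 = g 0) (h' : f' 0 = g' 0) : f = g := by
  have hinv (Y : ℝ) : |(1 + Y ^ 2)⁻¹| ≤ 1 := by
    rw [abs_of_pos (by positivity)]
    exact inv_le_one_of_one_le₀ (by linarith [sq_nonneg Y])
  have hmul (Y : ℝ) : |Y * (1 + Y ^ 2)⁻¹| ≤ 1 := by
    rw [abs_mul, abs_of_pos (a := (1 + Y ^ 2)⁻¹) (by positivity),
      mul_inv_le_iff₀ (by positivity), one_mul]
    nlinarith [sq_abs Y, sq_nonneg (|Y| - 1)]
  refine eq_of_second_order_linear_ode (𝕜 := ℂ) (x₀ := 0)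
    (P := ‖-(2 * a + 1 : ℂ)‖₊) (Q := ‖-(a ^ 2 - d ^ 2 : ℂ)‖₊)
    (p := fun Y => -(2 * a + 1) * (Y * (1 + Y ^ 2)⁻¹ : ℝ))
    (q := fun Y => -(a ^ 2 - d ^ 2) * ((1 + Y ^ 2)⁻¹ : ℝ)) (fun Y => ?_) (fun Y => ?_)
    hf.hasDerivAt (fun Y => (hf.hasDerivAt' Y).congr_deriv (by push_cast; ring))
    hg.hasDerivAt (fun Y => (hg.hasDerivAt' Y).congr_deriv (by push_cast; ring)) h h'
  · rw [nnnorm_mul, nnnorm_real]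
    exact mul_le_of_le_one_right' (hmul Y)
  · rw [nnnorm_mul, nnnorm_real]
    exact mul_le_of_le_one_right' (hinv Y)

end IsGegenbauerSolution

lemma isGegenbauerSolution_gegenbauerIntegral (ha : |d.re| < a) :
    IsGegenbauerSolution a d (fun Y => gegenbauerIntegral d a (Y * I))
      (fun Y => -a * I * gegenbauerIntegral d (a + 1) (Y * I)) := by
  have hderiv {b : ℝ} (hb : |d.re| < b) (Y : ℝ) :
      HasDerivAt (fun Y : ℝ => gegenbauerIntegral d b (Y * I))
        (-b * I * gegenbauerIntegral d (b + 1) (Y * I)) Y := by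
    have hY : HasDerivAt (fun Y : ℝ => (Y * I : ℂ)) I Y := by
      simpa using ofRealCLM.hasDerivAt.mul_const I
    refine ((hasDerivAt_gegenbauerIntegral hb (by simp)).comp Y hY).congr_deriv ?_
    ring
  refine ⟨hderiv ha, fun Y => ?_⟩
  refine ((hderiv (b := a + 1) (by linarith) Y).const_mul (-a * I : ℂ)).congr_deriv ?_
  have hrec := gegenbauerIntegral_recurrence ha (y := Y * I) (by simp)
  rw [eq_div_iff (one_add_sq_ne_zero Y), show a + 1 + 1 = a + 2 by ring]
  push_cast at hrec ⊢
  linear_combination -hrec + a * (a + 1) * gegenbauerIntegral d (a + 2) (Y * I) * I_sq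

/-- Both sides solve the Gegenbauer equation (the right one by `one_add_sq_rpow_mul`). Their values
at `0` agree by the choice of the constant, their derivatives by the condition on `d`. -/
lemma gegenbauerIntegral_connection {s : ℝ} (ha : |d.re| < a) (ha' : a < 1 / 2)
    (hd : s * cos (π * d) = cos (π * a)) (Y : ℝ) :
    gegenbauerIntegral d a (Y * I) - s * gegenbauerIntegral d a (-(Y * I)) =
      (1 - s) * gegenbauerIntegral d a 0 / gegenbauerIntegral d (1 - a) 0 *
        (((1 + Y ^ 2) ^ (1 / 2 - a) : ℝ) * gegenbauerIntegral d (1 - a) (Y * I)) := by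
  have hd' : |d.re| < 1 - a := by linarith
  have hsol := isGegenbauerSolution_gegenbauerIntegral ha
  have hne := gegenbauerIntegral_zero_ne_zero hd'
  have heq := (hsol.sub (hsol.comp_neg.const_smul s)).eq_of_initial_eq
    ((isGegenbauerSolution_gegenbauerIntegral hd').one_add_sq_rpow_mul.const_smul
      ((1 - s) * gegenbauerIntegral d a 0 / gegenbauerIntegral d (1 - a) 0)) ?_ ?_
  · simpa using congrFun heq Y
  · simp only [Pi.sub_apply, Pi.smul_apply, ofReal_neg, ofReal_zero, neg_zero, zero_mul,
      smul_eq_mul, ne_eq, OfNat.ofNat_ne_zero, not_false_eq_true, zero_pow, add_zero,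
      Real.one_rpow, ofReal_one]
    field_simp
  · have hcos : cos (π * a : ℂ) ≠ 0 := by
      have ha0 : 0 < a := (abs_nonneg _).trans_lt ha
      exact_mod_cast (Real.cos_pos_of_mem_Ioo
        ⟨by nlinarith [Real.pi_pos], by nlinarith [Real.pi_pos]⟩ : 0 < Real.cos (π * a)).ne'
    have hrefl := gegenbauerIntegral_zero_reflection ha hd'
    have hcancel : (1 + s) * a * gegenbauerIntegral d (a + 1) 0 * gegenbauerIntegral d (1 - a) 0 =
        (1 - s) * (1 - a) * gegenbauerIntegral d (1 - a + 1) 0 * gegenbauerIntegral d a 0 := by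
      refine mul_left_cancel₀ hcos ?_
      linear_combination s * hrefl - (a * gegenbauerIntegral d (a + 1) 0 *
        gegenbauerIntegral d (1 - a) 0 - (1 - a) * gegenbauerIntegral d (1 - a + 1) 0 *
        gegenbauerIntegral d a 0) * hd
    simp only [Pi.sub_apply, Pi.smul_apply, ofReal_neg, ofReal_zero, neg_zero, zero_mul, mul_zero,
      zero_div, smul_eq_mul, ne_eq, OfNat.ofNat_ne_zero, not_false_eq_true, zero_pow, add_zero,
      Real.one_rpow, ofReal_one, ofReal_sub]
    field_simp
    linear_combination -hcancel

end ImaginaryAxis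

section Parameter

variable {a s : ℝ}

lemma exists_mul_cos_pi_mul_eq_cos_pi_mul (ha0 : 0 < a) (ha : a < 1 / 2) (hs0 : 0 < s)
    (hs1 : s < 1) :
    ∃ d : ℂ, (conj d = d ∨ conj d = -d) ∧ |d.re| < a ∧ s * cos (π * d) = cos (π * a) := by
  have hpi : (π : ℂ) ≠ 0 := ofReal_ne_zero.2 Real.pi_ne_zero
  have hcos : 0 < Real.cos (π * a) :=
    Real.cos_pos_of_mem_Ioo ⟨by nlinarith [Real.pi_pos], by nlinarith [Real.pi_pos]⟩
  obtain ⟨σ, hσ⟩ : ∃ σ, s * σ = Real.cos (π * a) := ⟨_, mul_div_cancel₀ _ hs0.ne'⟩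
  have hlt : Real.cos (π * a) < σ := by nlinarith
  rw [← ofReal_mul π a, ← ofReal_cos, ← hσ, ofReal_mul]
  rcases le_or_gt σ 1 with hle | hgt
  · have harccos : Real.arccos σ < π * a := by
      rw [← Real.arccos_cos (x := π * a) (by positivity) (by nlinarith [Real.pi_pos])]
      exact Real.arccos_lt_arccos (Real.neg_one_le_cos _) hlt hle
    refine ⟨(Real.arccos σ / π : ℝ), .inl (conj_ofReal _), ?_, ?_⟩
    · rwa [ofReal_re, abs_of_nonneg (div_nonneg (Real.arccos_nonneg _) Real.pi_pos.le),
        div_lt_iff₀' Real.pi_pos]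
    · rw [ofReal_div, mul_div_cancel₀ _ hpi, ← ofReal_cos, Real.cos_arccos (by linarith) hle]
  · refine ⟨(Real.arcosh σ / π : ℝ) * I, .inr (by simp), by simpa using ha0, ?_⟩
    rw [ofReal_div, ← mul_assoc, mul_div_cancel₀ _ hpi, cos_mul_I, ← ofReal_cosh,
      Real.cosh_arcosh hgt.le]

lemma conj_gegenbauerIntegral_of_conj {d y : ℂ} (hd : conj d = d ∨ conj d = -d)
    (hy : -1 < y.re) : conj (gegenbauerIntegral d a y) = gegenbauerIntegral d a (conj y) := by
  rw [conj_gegenbauerIntegral d a hy]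
  rcases hd with h | h
  · rw [h]
  · rw [h, gegenbauerIntegral_neg]

end Parameter

section PolynomialHull

lemma sum_pow_pow_eq_ite {R : Type*} [CommRing R] [IsDomain R] {m : ℕ} {ω : R}
    (hω : IsPrimitiveRoot ω m) (j : ℕ) :
    ∑ k ∈ Finset.range m, (ω ^ j) ^ k = if m ∣ j then (m : R) else 0 := by
  split_ifs with hj
  · simp [(hω.pow_eq_one_iff_dvd j).2 hj]
  · have hne : ω ^ j - 1 ≠ 0 := sub_ne_zero.2 (mt (hω.pow_eq_one_iff_dvd j).1 hj)
    refine (mul_eq_zero.1 (mul_geom_sum (ω ^ j) m |>.trans ?_)).resolve_left hne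
    rw [pow_right_comm, hω.pow_eq_one, one_pow, sub_self]

lemma exists_eval_pow_eq_sum_eval {R : Type*} [CommRing R] [IsDomain R] {m : ℕ} {ω : R}
    (hω : IsPrimitiveRoot ω m) (p : MvPolynomial (Fin 2) R) :
    ∃ q : MvPolynomial (Fin 2) R, ∀ z u,
      MvPolynomial.eval ![z, u ^ m] q =
        ∑ k ∈ Finset.range m, MvPolynomial.eval ![z, ω ^ k * u] p := by
  induction p using MvPolynomial.induction_on' with
  | add p q hp hq =>
    obtain ⟨p', hp'⟩ := hp
    obtain ⟨q', hq'⟩ := hq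
    exact ⟨p' + q', fun z u => by simp only [map_add, hp', hq', Finset.sum_add_distrib]⟩
  | monomial s c =>
    have hsum (z u : R) :
        ∑ k ∈ Finset.range m, MvPolynomial.eval ![z, ω ^ k * u] (MvPolynomial.monomial s c) =
          c * (z ^ s 0 * u ^ s 1) * if m ∣ s 1 then (m : R) else 0 := by
      rw [← sum_pow_pow_eq_ite hω, Finset.mul_sum]
      refine Finset.sum_congr rfl fun k _ => ?_
      simp only [MvPolynomial.eval_monomial, Finsupp.prod_fintype, pow_zero, implies_true,
        Fin.prod_univ_two, Matrix.cons_val_zero, Matrix.cons_val_one]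
      ring
    simp only [hsum]
    split_ifs with hdvd
    · obtain ⟨l, hl⟩ := hdvd
      refine ⟨MvPolynomial.C (c * m) * MvPolynomial.X 0 ^ s 0 * MvPolynomial.X 1 ^ l,
        fun z u => ?_⟩
      simp only [map_mul, map_pow, MvPolynomial.eval_C, MvPolynomial.eval_X,
        Matrix.cons_val_zero, Matrix.cons_val_one, hl, pow_mul]
      ring
    · exact ⟨0, by simp⟩

lemma exists_eval_eq_eval_sub_div {k : Type*} [Field k] (t : k) (p : MvPolynomial (Fin 2) k) :
    ∃ q : MvPolynomial (Fin 2) k, ∀ z u,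
      MvPolynomial.eval ![z, u] q = MvPolynomial.eval ![z, (u - z) / t] p := by
  refine ⟨MvPolynomial.bind₁ ![.X 0, .C t⁻¹ * (.X 1 - .X 0)] p, fun z u => ?_⟩
  rw [MvPolynomial.eval, MvPolynomial.eval₂Hom_bind₁]
  congr 2
  ext i
  fin_cases i
  · simp
  · simp [div_eq_inv_mul]

lemma eval_ite_eq_eval_vecCons (z w : ℂ) (p : MvPolynomial (Fin 2) ℂ) :
    MvPolynomial.eval (fun i => if i = 0 then z else w) p = MvPolynomial.eval ![z, w] p := by
  congr 2
  ext i
  fin_cases i <;> rfl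

lemma differentiable_eval_vecCons (p : MvPolynomial (Fin 2) ℂ) :
    Differentiable ℂ fun x : ℂ × ℂ => MvPolynomial.eval ![x.1, x.2] p := by
  have hp : Differentiable ℂ fun x : Fin 2 → ℂ => MvPolynomial.eval x p := fun x =>
    (AnalyticOnNhd.eval_mvPolynomial p x (Set.mem_univ x)).differentiableAt
  refine hp.comp (differentiable_pi.2 fun i => ?_)
  fin_cases i
  · exact differentiable_fst
  · exact differentiable_snd

lemma exists_norm_eval_le_of_isBounded {K : Set (ℂ × ℂ)} (hK : Bornology.IsBounded K)
    (p : MvPolynomial (Fin 2) ℂ) : ∃ C, ∀ x ∈ K, ‖MvPolynomial.eval ![x.1, x.2] p‖ ≤ C := by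
  obtain ⟨C, hC⟩ := hK.isCompact_closure.exists_bound_of_continuousOn
    (differentiable_eval_vecCons p).continuous.continuousOn
  exact ⟨C, fun x hx => hC x (subset_closure hx)⟩

lemma norm_le_of_bounded_on_right_half_plane {E : Type*} [NormedAddCommGroup E] [NormedSpace ℂ E]
    {f : ℂ → E} {C M : ℝ} (hf : DiffContOnCl ℂ f {y | 0 < y.re})
    (hM : ∀ y : ℂ, 0 ≤ y.re → ‖f y‖ ≤ M) (hC : ∀ Y : ℝ, ‖f (Y * I)‖ ≤ C) {y : ℂ}
    (hy : 0 ≤ y.re) : ‖f y‖ ≤ C := by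
  refine PhragmenLindelof.right_half_plane_of_bounded_on_real hf ⟨1, one_lt_two, 0, ?_⟩ ?_ hC hy
  · refine .of_bound M (eventually_inf_principal.2 (.of_forall fun z hz => ?_))
    simpa using hM z (le_of_lt hz)
  · exact ⟨M, eventually_map.2 ((eventually_ge_atTop 0).mono fun x hx => hM x (by simpa using hx))⟩

/-- For a polynomial `p`, the mean of `p (Z, (u - Z) / t)` over the roots of `u ^ m = h` is
holomorphic, bounded by `sup |p|` over `K` on the imaginary axis, and equal to `p (Z, -Z / t)` where
`h` vanishes. -/
lemma mem_polyHull2_of_half_plane {K : Set (ℂ × ℂ)} (hK : Bornology.IsBounded K) {m : ℕ}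
    (hm : m ≠ 0) {t y₀ : ℂ} {Z h : ℂ → ℂ}
    (hdiff : DiffContOnCl ℂ (fun y => (Z y, h y)) {y | 0 < y.re})
    (hbdd : Bornology.IsBounded ((fun y => (Z y, h y)) '' {y | 0 ≤ y.re}))
    (haxis : ∀ (Y : ℝ) (u : ℂ), u ^ m = h (Y * I) → (Z (Y * I), (u - Z (Y * I)) / t) ∈ K)
    (hy₀ : 0 ≤ y₀.re) (h₀ : h y₀ = 0) : (Z y₀, -Z y₀ / t) ∈ polyHull2 K := by
  intro p
  simp only [eval_ite_eq_eval_vecCons]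
  set S := sSup ((fun w : ℂ × ℂ => ‖MvPolynomial.eval ![w.1, w.2] p‖) '' K)
  have hS (x : ℂ × ℂ) (hx : x ∈ K) : ‖MvPolynomial.eval ![x.1, x.2] p‖ ≤ S := by
    obtain ⟨C, hC⟩ := exists_norm_eval_le_of_isBounded hK p
    exact le_csSup ⟨C, Set.forall_mem_image.2 hC⟩ (Set.mem_image_of_mem _ hx)
  obtain ⟨p', hp'⟩ := exists_eval_eq_eval_sub_div t p
  have hω := Complex.isPrimitiveRoot_exp m hm
  obtain ⟨q, hq⟩ := exists_eval_pow_eq_sum_eval hω p'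
  simp only [hp'] at hq
  have hq_axis (Y : ℝ) : ‖MvPolynomial.eval ![Z (Y * I), h (Y * I)] q‖ ≤ m * S := by
    obtain ⟨u, hu⟩ := IsAlgClosed.exists_pow_nat_eq (h (Y * I)) hm.bot_lt
    rw [← hu, hq]
    refine (norm_sum_le_of_le _ fun k _ => hS (Z (Y * I), _) (haxis Y _ ?_)).trans_eq (by simp)
    rw [mul_pow, pow_right_comm, hω.pow_eq_one, one_pow, one_mul, hu]
  obtain ⟨M, hM⟩ := exists_norm_eval_le_of_isBounded hbdd q
  have hq₀ : MvPolynomial.eval ![Z y₀, h y₀] q = m * MvPolynomial.eval ![Z y₀, -Z y₀ / t] p := by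
    have hzero := hq (Z y₀) 0
    rw [zero_pow hm] at hzero
    simpa [h₀] using hzero
  have hle : ‖MvPolynomial.eval ![Z y₀, h y₀] q‖ ≤ m * S := norm_le_of_bounded_on_right_half_plane
    ((differentiable_eval_vecCons q).comp_diffContOnCl hdiff)
    (fun y hy => hM _ (Set.mem_image_of_mem _ hy)) hq_axis hy₀
  rw [hq₀, norm_mul, Complex.norm_natCast] at hle
  exact le_of_mul_le_mul_left hle (by positivity)

end PolynomialHull

section RotatedPlanes

variable {m : ℕ} {t : ℂ}

/-- The union of the real planes `z + t w = ζ (z + t z̄)` of `ℂ²`, where `ζ` runs through the `m`-th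
roots of unity. -/
def rotatedPlanes (m : ℕ) (t : ℂ) : Set (ℂ × ℂ) :=
  {p | (p.1 + t * p.2) ^ m = (p.1 + t * conj p.1) ^ m}

lemma P0_union_P1_union_P2_eq_rotatedPlanes {t : ℝ} (ht : t ≠ 0) :
    P0 ∪ P1 t ∪ P2 t = rotatedPlanes 3 t := by
  have htC : (t : ℂ) ≠ 0 := ofReal_ne_zero.2 ht
  have hsqrt : (√3 : ℂ) ^ 2 = 3 := by exact_mod_cast Real.sq_sqrt (by norm_num : (0 : ℝ) ≤ 3)
  ext ⟨z, w⟩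
  have hplane (ζ : ℂ) : z + t * w - ζ * (z + t * conj z) = 0 ↔
      w = (ζ - 1) / t * z + ζ * conj z := by
    rw [show z + t * w - ζ * (z + t * conj z) = t * (w - ((ζ - 1) / t * z + ζ * conj z)) by
      field_simp; ring, mul_eq_zero, or_iff_right htC, sub_eq_zero]
  have hP0 : (z, w) ∈ P0 ↔ z + t * w - 1 * (z + t * conj z) = 0 := by
    rw [hplane, sub_self, zero_div, zero_mul, zero_add, one_mul]
    rfl
  have hP1 : (z, w) ∈ P1 t ↔ z + t * w - (-1 + I * √3) / 2 * (z + t * conj z) = 0 := by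
    rw [hplane]
    refine Eq.congr_right ?_
    field_simp
    linear_combination -z * hsqrt
  have hP2 : (z, w) ∈ P2 t ↔ z + t * w - (-1 - I * √3) / 2 * (z + t * conj z) = 0 := by
    rw [hplane]
    refine Eq.congr_right ?_
    field_simp
    linear_combination -z * hsqrt
  have hfactor (u v : ℂ) : v ^ 3 - u ^ 3 =
      (v - 1 * u) * (v - (-1 + I * √3) / 2 * u) * (v - (-1 - I * √3) / 2 * u) := by
    linear_combination (v - u) * u ^ 2 / 4 * ((√3 : ℂ) ^ 2 * I_sq - hsqrt)
  rw [Set.mem_union, Set.mem_union, hP0, hP1, hP2, ← mul_eq_zero, ← mul_eq_zero, ← hfactor,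
    sub_eq_zero]
  rfl

lemma neg_div_notMem_rotatedPlanes (hm : m ≠ 0) (ht0 : t ≠ 0) (ht1 : ‖t‖ < 1) {z : ℂ}
    (hz : z ≠ 0) : (z, -z / t) ∉ rotatedPlanes m t := by
  intro (hmem : (z + t * (-z / t)) ^ m = (z + t * conj z) ^ m)
  rw [mul_div_cancel₀ _ ht0, add_neg_cancel, zero_pow hm] at hmem
  have hnorm := congrArg norm (eq_neg_of_add_eq_zero_left (pow_eq_zero_iff hm |>.1 hmem.symm))
  rw [norm_neg, norm_mul, RCLike.norm_conj] at hnorm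
  nlinarith [norm_pos_iff.2 hz]

lemma norm_snd_le_of_mem_rotatedPlanes (hm : m ≠ 0) (ht : t ≠ 0) {p : ℂ × ℂ}
    (hp : p ∈ rotatedPlanes m t) : ‖p.2‖ ≤ (2 / ‖t‖ + 1) * ‖p.1‖ := by
  have hnorm : ‖p.1 + t * p.2‖ = ‖p.1 + t * conj p.1‖ :=
    (pow_left_inj₀ (norm_nonneg _) (norm_nonneg _) hm).1 <| by
      rw [← norm_pow, ← norm_pow]; exact congrArg norm hp
  have hsub : ‖t * p.2‖ ≤ ‖p.1 + t * p.2‖ + ‖p.1‖ := by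
    simpa using norm_sub_le (p.1 + t * p.2) p.1
  have hadd := norm_add_le p.1 (t * conj p.1)
  rw [norm_mul, RCLike.norm_conj] at hadd
  rw [norm_mul] at hsub
  have ht' : 0 < ‖t‖ := norm_pos_iff.2 ht
  rw [show (2 / ‖t‖ + 1) * ‖p.1‖ = (2 * ‖p.1‖ + ‖t‖ * ‖p.1‖) / ‖t‖ by field_simp, le_div_iff₀' ht']
  linarith

lemma mem_eClosedBall_of_norm_add_le {p : ℂ × ℂ} {r : ℝ} (hp : ‖p.1‖ + ‖p.2‖ ≤ r) :
    p ∈ eClosedBall r := by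
  refine (?_ : ‖p.1‖ ^ 2 + ‖p.2‖ ^ 2 ≤ (‖p.1‖ + ‖p.2‖) ^ 2).trans (pow_le_pow_left₀ ?_ hp 2)
  · nlinarith [norm_nonneg p.1, norm_nonneg p.2]
  · positivity

lemma isBounded_eClosedBall (r : ℝ) : Bornology.IsBounded (eClosedBall r) := by
  refine Metric.isBounded_closedBall (x := (0 : ℂ × ℂ)) (r := |r|) |>.subset fun p hp => ?_
  have hp : ‖p.1‖ ^ 2 + ‖p.2‖ ^ 2 ≤ r ^ 2 := hp
  rw [mem_closedBall_zero_iff, Prod.norm_def]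
  refine max_le ?_ ?_
  · exact abs_norm p.1 ▸ sq_le_sq.1 (by nlinarith [sq_nonneg ‖p.2‖])
  · exact abs_norm p.2 ▸ sq_le_sq.1 (by nlinarith [sq_nonneg ‖p.1‖])

lemma exists_norm_eq_mul_conj_eq (t : ℂ) {l : ℝ} (hl : 0 ≤ l) :
    ∃ κ : ℂ, ‖κ‖ = l ∧ t * conj κ = -‖t‖ * κ := by
  refine ⟨l * (I * exp ((t.arg / 2 : ℝ) * I)), ?_, ?_⟩
  · rw [norm_mul, norm_mul, norm_I, norm_exp_ofReal_mul_I, Complex.norm_of_nonneg hl, one_mul,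
      mul_one]
  · have hexp : exp (t.arg * I) * exp (-((t.arg / 2 : ℝ) * I)) = exp ((t.arg / 2 : ℝ) * I) := by
      rw [← exp_add]; congr 1; push_cast; ring
    have hconj : conj (l * (I * exp ((t.arg / 2 : ℝ) * I))) =
        l * (-I * exp (-((t.arg / 2 : ℝ) * I))) := by
      rw [map_mul, map_mul, conj_I, conj_ofReal, ← exp_conj, map_mul, conj_I,
        conj_ofReal, mul_neg]
    rw [hconj]
    nth_rewrite 1 [← norm_mul_exp_arg_mul_I t]
    linear_combination -(‖t‖ * l * I : ℂ) * hexp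

end RotatedPlanes

section NonConvexity

variable {d : ℂ} {a : ℝ} {m : ℕ} {t : ℂ}

lemma exists_norm_gegenbauerIntegral_le (ha : |d.re| < a) :
    ∃ C, ∀ y : ℂ, 0 ≤ y.re → ‖gegenbauerIntegral d a y‖ ≤ C := by
  simpa using norm_gegenbauerIntegral_add_le ha le_rfl

lemma exists_norm_one_sub_sq_mul_gegenbauerIntegral_pow_le (ha : |d.re| < a) (hm : m ≠ 0) :
    ∃ C, ∀ y : ℂ, 0 ≤ y.re → ‖(1 - y ^ 2) * gegenbauerIntegral d (a + 2 / m) y ^ m‖ ≤ C := by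
  obtain ⟨C, hC⟩ := norm_gegenbauerIntegral_add_le ha (b := 2 / m) (by positivity)
  refine ⟨C ^ m, fun y hy => ?_⟩
  have hy1 : 0 < ‖y + 1‖ :=
    one_pos.trans_le <| (by simpa using hy : 1 ≤ (y + 1).re).trans (re_le_norm _)
  have hreflect : ‖1 - y‖ ≤ ‖y + 1‖ := by
    rw [← sq_le_sq₀ (norm_nonneg _) (norm_nonneg _), ← normSq_eq_norm_sq, ← normSq_eq_norm_sq,
      normSq_apply, normSq_apply]
    simp only [sub_re, sub_im, add_re, add_im, one_re, one_im]
    nlinarith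
  have hdecay : ((‖y + 1‖ : ℝ) ^ (-(2 / m : ℝ))) ^ m = (‖y + 1‖ ^ 2)⁻¹ := by
    rw [← Real.rpow_mul_natCast hy1.le, neg_mul, div_mul_cancel₀ _ (Nat.cast_ne_zero.2 hm),
      Real.rpow_neg hy1.le, Real.rpow_two]
  have hfactor : ‖1 - y ^ 2‖ ≤ ‖y + 1‖ ^ 2 := by
    rw [show 1 - y ^ 2 = (1 - y) * (y + 1) by ring, norm_mul, sq]
    gcongr
  calc ‖(1 - y ^ 2) * gegenbauerIntegral d (a + 2 / m) y ^ m‖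
      ≤ ‖y + 1‖ ^ 2 * (C * ‖y + 1‖ ^ (-(2 / m : ℝ))) ^ m := by
        rw [norm_mul, norm_pow]
        gcongr
        exact hC y hy
    _ = C ^ m := by rw [mul_pow, hdecay]; field_simp

lemma add_mul_conj_gegenbauerIntegral_pow {κ : ℂ} (hm : m ≠ 0) (ha : |d.re| < a)
    (ham : a + 1 / m = 1 / 2) (hconj : conj d = d ∨ conj d = -d)
    (hd : ‖t‖ * cos (π * d) = cos (π * a)) (hκ : t * conj κ = -‖t‖ * κ) (Y : ℝ) :
    (κ * gegenbauerIntegral d a (Y * I) + t * conj (κ * gegenbauerIntegral d a (Y * I))) ^ m =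
      (κ * ((1 - ‖t‖) * gegenbauerIntegral d a 0 / gegenbauerIntegral d (1 - a) 0)) ^ m *
        ((1 - (Y * I) ^ 2) * gegenbauerIntegral d (1 - a) (Y * I) ^ m) := by
  have hm' : (0 : ℝ) < 1 / m := by positivity
  have hconj_axis : conj (gegenbauerIntegral d a (Y * I)) = gegenbauerIntegral d a (-(Y * I)) := by
    rw [conj_gegenbauerIntegral_of_conj hconj (by simp)]
    simp
  have hpow : (((1 + Y ^ 2) ^ (1 / 2 - a) : ℝ) : ℂ) ^ m = 1 - (Y * I) ^ 2 := by
    rw [← ham, add_sub_cancel_left, one_div, ← ofReal_pow,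
      Real.rpow_inv_natCast_pow (by positivity) hm, mul_pow, I_sq]
    push_cast
    ring
  rw [map_mul, ← mul_assoc, hκ, hconj_axis, ← hpow, ← mul_pow, ← mul_pow]
  congr 1
  linear_combination κ * gegenbauerIntegral_connection ha (by linarith) hd Y

lemma mem_eClosedBall_of_mem_rotatedPlanes (hm : m ≠ 0) (ht : t ≠ 0) {p : ℂ × ℂ}
    (hp : p ∈ rotatedPlanes m t) {r : ℝ} (hr : (2 / ‖t‖ + 2) * ‖p.1‖ ≤ r) : p ∈ eClosedBall r :=
  mem_eClosedBall_of_norm_add_le (by linarith [norm_snd_le_of_mem_rotatedPlanes hm ht hp])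

lemma mem_polyHull2_rotatedPlanes_of_norm_le {κ : ℂ} {r : ℝ} (hm : m ≠ 0) (ht : t ≠ 0)
    (ha : |d.re| < a) (ham : a + 1 / m = 1 / 2) (hconj : conj d = d ∨ conj d = -d)
    (hd : ‖t‖ * cos (π * d) = cos (π * a)) (hκ : t * conj κ = -‖t‖ * κ)
    (hr : ∀ y : ℂ, 0 ≤ y.re → (2 / ‖t‖ + 2) * ‖κ * gegenbauerIntegral d a y‖ ≤ r) :
    (κ * gegenbauerIntegral d a 1, -(κ * gegenbauerIntegral d a 1) / t) ∈
      polyHull2 (rotatedPlanes m t ∩ eClosedBall r) := by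
  have hm_pos : (0 : ℝ) < 1 / m := by positivity
  have ha' : |d.re| < 1 - a := by linarith
  obtain ⟨C₁, hC₁⟩ := exists_norm_gegenbauerIntegral_le ha
  obtain ⟨C₂, hC₂⟩ := exists_norm_one_sub_sq_mul_gegenbauerIntegral_pow_le ha hm
  rw [show a + 2 / m = 1 - a by linear_combination 2 * ham] at hC₂
  let Z (y : ℂ) := κ * gegenbauerIntegral d a y
  let A := (κ * ((1 - ‖t‖) * gegenbauerIntegral d a 0 / gegenbauerIntegral d (1 - a) 0)) ^ m
  let h (y : ℂ) := A * ((1 - y ^ 2) * gegenbauerIntegral d (1 - a) y ^ m)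
  have hdiff : DiffContOnCl ℂ (fun y => (Z y, h y)) {y | 0 < y.re} := by
    have hIa := differentiableOn_gegenbauerIntegral ha
    have hI1a := differentiableOn_gegenbauerIntegral ha'
    refine DifferentiableOn.diffContOnCl (DifferentiableOn.mono (t := {y : ℂ | -1 < y.re}) ?_ ?_)
    · fun_prop
    · rw [closure_setOfPred_lt_re]
      exact fun y (hy : 0 ≤ y.re) => neg_one_lt_zero.trans_le hy
  have hbdd : Bornology.IsBounded ((fun y => (Z y, h y)) '' {y | 0 ≤ y.re}) := by
    refine isBounded_iff_forall_norm_le.2 ⟨max (‖κ‖ * C₁) (‖A‖ * C₂), ?_⟩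
    rintro _ ⟨y, hy, rfl⟩
    refine max_le_max ?_ ?_
    · exact (norm_mul_le _ _).trans (mul_le_mul_of_nonneg_left (hC₁ y hy) (norm_nonneg _))
    · exact (norm_mul_le _ _).trans (mul_le_mul_of_nonneg_left (hC₂ y hy) (norm_nonneg _))
  refine mem_polyHull2_of_half_plane (Z := Z) (y₀ := 1)
    ((isBounded_eClosedBall r).subset Set.inter_subset_right) hm hdiff hbdd
    (fun Y u hu => ?_) (by simp) (by simp [h])
  have hmem : (Z (Y * I), (u - Z (Y * I)) / t) ∈ rotatedPlanes m t := by
    change (Z (Y * I) + t * ((u - Z (Y * I)) / t)) ^ m = (Z (Y * I) + t * conj (Z (Y * I))) ^ m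
    rw [mul_div_cancel₀ _ ht, add_sub_cancel, hu,
      add_mul_conj_gegenbauerIntegral_pow hm ha ham hconj hd hκ]
  exact ⟨hmem, mem_eClosedBall_of_mem_rotatedPlanes hm ht hmem (hr (Y * I) (by simp))⟩

lemma exists_ne_zero_mem_polyHull2_rotatedPlanes (hm : 3 ≤ m) (ht0 : t ≠ 0) (ht1 : ‖t‖ < 1)
    {r : ℝ} (hr : 0 < r) :
    ∃ z ≠ 0, (z, -z / t) ∈ polyHull2 (rotatedPlanes m t ∩ eClosedBall r) := by
  obtain ⟨a, ham⟩ : ∃ a : ℝ, a + 1 / m = 1 / 2 := ⟨_, sub_add_cancel _ _⟩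
  have hm_le : (1 : ℝ) / m ≤ 1 / 3 := one_div_le_one_div_of_le three_pos (by exact_mod_cast hm)
  have hm_pos : (0 : ℝ) < 1 / m := by positivity
  obtain ⟨d, hconj, ha, hd⟩ := exists_mul_cos_pi_mul_eq_cos_pi_mul (a := a) (by linarith)
    (by linarith) (norm_pos_iff.2 ht0) ht1
  obtain ⟨C, hC⟩ := exists_norm_gegenbauerIntegral_le ha
  obtain ⟨l, hl, hlr⟩ := exists_pos_mul_lt hr ((2 / ‖t‖ + 2) * C)
  obtain ⟨κ, rfl, hκ⟩ := exists_norm_eq_mul_conj_eq t hl.le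
  refine ⟨κ * gegenbauerIntegral d a 1,
    mul_ne_zero (norm_pos_iff.1 hl) (gegenbauerIntegral_one_ne_zero ha),
    mem_polyHull2_rotatedPlanes_of_norm_le (by omega) ht0 ha ham hconj hd hκ fun y hy => ?_⟩
  calc (2 / ‖t‖ + 2) * ‖κ * gegenbauerIntegral d a y‖
      ≤ (2 / ‖t‖ + 2) * (‖κ‖ * C) := by
        rw [norm_mul]
        gcongr
        exact hC y hy
    _ ≤ r := by linarith

end NonConvexity

theorem stmt_3_general {m : ℕ} (hm : 3 ≤ m) {t : ℂ} (ht0 : t ≠ 0) (ht1 : ‖t‖ < 1) {r : ℝ}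
    (hr : 0 < r) : ¬ PolyConvex2 (rotatedPlanes m t ∩ eClosedBall r) := by
  intro (hconvex : polyHull2 _ = _)
  obtain ⟨z, hz, hmem⟩ := exists_ne_zero_mem_polyHull2_rotatedPlanes hm ht0 ht1 hr
  rw [hconvex] at hmem
  exact neg_div_notMem_rotatedPlanes (by omega) ht0 ht1 hz hmem.1

/-- for `0 < t < 1` and every `r > 0`, `(P₀ᵗ ∪ P₁ᵗ ∪ P₂ᵗ) ∩ B̄(0;r)` is not
polynomially convex; in particular `P₀ᵗ ∪ P₁ᵗ ∪ P₂ᵗ` is not locally polynomially convex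
at the origin. -/
theorem stmt_3 (t : ℝ) (ht0 : 0 < t) (ht1 : t < 1) :
    (∀ r > (0 : ℝ), ¬ PolyConvex2 ((P0 ∪ P1 t ∪ P2 t) ∩ eClosedBall r)) ∧
      ¬ (∃ r > (0 : ℝ), PolyConvex2 ((P0 ∪ P1 t ∪ P2 t) ∩ eClosedBall r)) := by
  have hball : ∀ r > (0 : ℝ), ¬ PolyConvex2 ((P0 ∪ P1 t ∪ P2 t) ∩ eClosedBall r) := by
    intro r hr
    rw [P0_union_P1_union_P2_eq_rotatedPlanes ht0.ne']
    exact stmt_3_general le_rfl (ofReal_ne_zero.2 ht0.ne')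
      (by rwa [Complex.norm_of_nonneg ht0.le]) hr
  exact ⟨hball, fun ⟨r, hr, hconvex⟩ => hball r hr hconvex⟩
end
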